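/- arXiv:2310.14473 — 3 statements merged into one kernel-verified Lean document; each statement's English description precedes it below -/
import Mathlib

section
/- (Dual attainment) Assume [A'] and that (μ, ν) is irreducible. Then there exist Borel measurable functions φ, ψ : ℝ → ℝ ∪ {+∞}, finite μ-a.e. and ν-a.e. respectively, and Borel measurable θ_l : ℝ → ℝ (l = 1,…,L), such that c_l(x,y) ≤ φ(x) + ψ(y) + θ_l(x)(y − x) for all l and all (x,y) ∈ ℝ², and such that for every maximizer (γ₁,…,γ_L) of the relaxed problem P̄_c, equality c_l(x,y) = φ(x) + ψ(y) + θ_l(x)(y − x) holds γ_l-a.e. for each l = 1,…,L. -/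
open MeasureTheory ProbabilityTheory Set
open scoped ENNReal

noncomputable section

/-- Convex order between finite-first-moment probability measures on `ℝ`:
`μ ≼_c ν` iff `μ(f) ≤ ν(f)` for every convex `f`. -/
def ConvexOrder (μ ν : Measure ℝ) : Prop :=
  ∀ f : ℝ → ℝ, ConvexOn ℝ Set.univ f → Integrable f ν →
    Integrable f μ ∧ ∫ x, f x ∂μ ≤ ∫ x, f x ∂ν

/-- `κ` is a disintegration kernel of a martingale transport from `μ` to `ν`;
the associated transport plan is `π = μ ⊗ₘ κ ∈ ℳ(μ,ν)`. -/
def MartKernel (μ ν : Measure ℝ) (κ : Kernel ℝ ℝ) : Prop :=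
  IsMarkovKernel κ ∧ (μ ⊗ₘ κ).map Prod.snd = ν ∧
    ∀ᵐ x ∂μ, Integrable id (κ x) ∧ ∫ y, y ∂(κ x) = x

/-- The set `ℳ(μ,ν)` of martingale transports from `μ` to `ν`. -/
def MT (μ ν : Measure ℝ) : Set (Measure (ℝ × ℝ)) :=
  {π | ∃ κ : Kernel ℝ ℝ, MartKernel μ ν κ ∧ π = μ ⊗ₘ κ}

/-- Membership in `ℳ̄`: `γ` is a nonnegative finite measure which is zero or a scalar
multiple of a martingale transport between its own marginals. -/
def IsSubMart (γ : Measure (ℝ × ℝ)) : Prop :=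
  IsFiniteMeasure γ ∧ (γ = 0 ∨ ∃ κ : Kernel ℝ ℝ, IsMarkovKernel κ ∧
    γ.map Prod.fst ⊗ₘ κ = γ ∧
    ∀ᵐ x ∂(γ.map Prod.fst), Integrable id (κ x) ∧ ∫ y, y ∂(κ x) = x)

/-- Membership in `ℳ_L(μ,ν)`. -/
def MLfeasible (μ ν : Measure ℝ) {L : ℕ} (γ : Fin L → Measure (ℝ × ℝ)) : Prop :=
  (∀ l, IsSubMart (γ l)) ∧ (∑ l, γ l) ∈ MT μ ν

/-- The relaxed value `P̄_c` for a vector cost `c = (c_1, …, c_L)`. -/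
def RelaxedValue (μ ν : Measure ℝ) {L : ℕ} (c : Fin L → ℝ × ℝ → ℝ) : ℝ :=
  sSup {r | ∃ γ : Fin L → Measure (ℝ × ℝ), MLfeasible μ ν γ ∧
    r = ∑ l, ∫ p, c l p ∂(γ l)}

/-- The primal value `P_c` for an American option payoff `(c₁(x), c₂(x,y))`. -/
def PrimalValue (μ ν : Measure ℝ) (c₁ : ℝ → ℝ) (c₂ : ℝ × ℝ → ℝ) : ℝ :=
  sSup {r | ∃ (κ : Kernel ℝ ℝ) (μ₁ : Measure ℝ), MartKernel μ ν κ ∧ μ₁ ≤ μ ∧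
    r = ∫ p, c₁ p.1 ∂(μ₁ ⊗ₘ κ) + ∫ p, c₂ p ∂((μ - μ₁) ⊗ₘ κ)}

/-- Dual feasibility: membership of `(φ, ψ, θ)` in `Ψ̄_c`. -/
def DualFeasible (μ ν : Measure ℝ) {L : ℕ} (c : Fin L → ℝ × ℝ → ℝ)
    (φ ψ : ℝ → ℝ) (θ : Fin L → ℝ → ℝ) : Prop :=
  Continuous φ ∧ Integrable φ μ ∧ Continuous ψ ∧ Integrable ψ ν ∧
    (∀ l, Continuous (θ l) ∧ ∃ M, ∀ x, |θ l x| ≤ M) ∧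
    ∀ l, ∀ x y : ℝ, c l (x, y) ≤ φ x + ψ y + θ l x * (y - x)

/-- The dual value `D̄_c`. -/
def DualValue (μ ν : Measure ℝ) {L : ℕ} (c : Fin L → ℝ × ℝ → ℝ) : ℝ :=
  sInf {r | ∃ φ ψ θ, DualFeasible μ ν c φ ψ θ ∧ r = ∫ x, φ x ∂μ + ∫ y, ψ y ∂ν}

/-- Assumption [A'] for a vector cost. -/
def AssumpA' (μ ν : Measure ℝ) {L : ℕ} (c : Fin L → ℝ × ℝ → ℝ) : Prop :=
  IsProbabilityMeasure μ ∧ IsProbabilityMeasure ν ∧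
  Integrable id μ ∧ Integrable id ν ∧
  (∀ l, Continuous (c l)) ∧ ConvexOrder μ ν ∧
  ∃ v w : ℝ → ℝ, Continuous v ∧ Continuous w ∧ Integrable v μ ∧ Integrable w ν ∧
    ∀ x y : ℝ, ∑ l, |c l (x, y)| ≤ v x + w y

/-- Assumption [A] for an American payoff `(c₁, c₂)`. -/
def AssumpA (μ ν : Measure ℝ) (c₁ : ℝ → ℝ) (c₂ : ℝ × ℝ → ℝ) : Prop :=
  IsProbabilityMeasure μ ∧ IsProbabilityMeasure ν ∧
  Integrable id μ ∧ Integrable id ν ∧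
  Continuous c₁ ∧ Continuous c₂ ∧ ConvexOrder μ ν ∧
  ∃ v w : ℝ → ℝ, Continuous v ∧ Continuous w ∧ Integrable v μ ∧ Integrable w ν ∧
    ∀ x y : ℝ, |c₁ x| + |c₂ (x, y)| ≤ v x + w y

/-- The potential function `u_ξ`. -/
def potential (ξ : Measure ℝ) (x : ℝ) : ℝ := ∫ y, |x - y| ∂ξ

/-- `(μ, ν)` is an irreducible pair. -/
def IrreduciblePair (μ ν : Measure ℝ) : Prop :=
  IsOpen {x | potential μ x < potential ν x} ∧
  IsConnected {x | potential μ x < potential ν x} ∧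
  μ {x | potential μ x < potential ν x} = μ Set.univ

noncomputable section

/-- `p` is a subgradient of `χ` at `a`. -/
def IsSub (χ : ℝ → ℝ) (a p : ℝ) : Prop := ∀ z, χ a + p * (z - a) ≤ χ z

lemma exists_isSub {χ : ℝ → ℝ} (h : ConvexOn ℝ univ χ) (a : ℝ) : ∃ p, IsSub χ a p := by
  refine ⟨derivWithin χ (Ioi a) a, fun z => ?_⟩
  rcases lt_trichotomy z a with hz | hz | hz
  · have h1 := h.slope_le_leftDeriv_of_mem_interior (x := z) (y := a) (mem_univ _) (by simp) hz
    have h2 := h.leftDeriv_le_rightDeriv_of_mem_interior (x := a) (by simp)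
    have h3 := h1.trans h2
    rw [slope_def_field, div_le_iff₀ (by linarith)] at h3
    linarith
  · subst hz; simp
  · have h1 := h.rightDeriv_le_slope_of_mem_interior (x := a) (y := z) (by simp) (mem_univ _) hz
    rw [slope_def_field, le_div_iff₀ (by linarith)] at h1
    linarith

lemma IsSub.mono {χ : ℝ → ℝ} {a b p q : ℝ} (hp : IsSub χ a p) (hq : IsSub χ b q) (hab : a < b) :
    p ≤ q := by
  have h1 := hp b
  have h2 := hq a
  by_contra! h
  nlinarith

lemma convexOn_trunc_ge {g : ℝ → ℝ} (h : ConvexOn ℝ univ g) (h0 : ∀ z, 0 ≤ g z) {a : ℝ}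
    (ha : g a = 0) : ConvexOn ℝ univ (fun z => if a ≤ z then g z else 0) := by
  have key : ∀ z w, a ≤ z → z ≤ w → g z ≤ g w := by
    intro z w hz hw
    obtain ⟨p, hp⟩ := exists_isSub h z
    have h1 := hp a
    have h2 := hp w
    have := h0 z
    rcases hz.eq_or_lt with rfl | hz
    · rw [ha]; exact h0 w
    · have : 0 ≤ p := by
        by_contra! hlt
        nlinarith
      nlinarith
  have e : (fun z => if a ≤ z then g z else 0) = fun z => g (max z a) := by
    funext z
    split_ifs with hz
    · rw [max_eq_left hz]
    · rw [max_eq_right (by linarith), ha]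
  rw [e]
  refine ⟨convex_univ, fun x _ y _ s t hs ht hst => ?_⟩
  have h2 := h.2 (mem_univ (max x a)) (mem_univ (max y a)) hs ht hst
  refine le_trans (key _ _ (le_max_right _ _) ?_) h2
  simp only [smul_eq_mul]
  refine max_le ?_ ?_
  · have := le_max_left x a
    have := le_max_left y a
    gcongr
  · have h3 := le_max_right x a
    have h4 := le_max_right y a
    calc a = s * a + t * a := by rw [← add_mul, hst, one_mul]
      _ ≤ _ := by gcongr

lemma convexOn_neg_comp {g : ℝ → ℝ} (h : ConvexOn ℝ univ g) :
    ConvexOn ℝ univ (fun z => g (-z)) := by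
  refine ⟨convex_univ, fun x _ y _ s t hs ht hst => ?_⟩
  have h2 := h.2 (mem_univ (-x)) (mem_univ (-y)) hs ht hst
  simp only [smul_eq_mul] at *
  convert h2 using 2
  ring

lemma convexOn_trunc_le {g : ℝ → ℝ} (h : ConvexOn ℝ univ g) (h0 : ∀ z, 0 ≤ g z) {a : ℝ}
    (ha : g a = 0) : ConvexOn ℝ univ (fun z => if z ≤ a then g z else 0) := by
  have h1 := convexOn_neg_comp (convexOn_trunc_ge (convexOn_neg_comp h) (fun z => h0 _) (a := -a)
    (by simpa using ha))
  convert h1 using 2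
  simp

lemma convexOn_affine (p q : ℝ) : ConvexOn ℝ univ (fun z : ℝ => p + q * z) := by
  refine ⟨convex_univ, fun x _ y _ s t hs ht hst => le_of_eq ?_⟩
  simp only [smul_eq_mul]
  linear_combination (-p) * hst

lemma convexOn_sub_affine {χ : ℝ → ℝ} (h : ConvexOn ℝ univ χ) (a p r : ℝ) :
    ConvexOn ℝ univ (fun z => χ z - (r + p * (z - a))) := by
  have e : (fun z => χ z - (r + p * (z - a))) = χ + fun z => -(r - p * a) + (-p) * z := by
    funext z
    simp only [Pi.add_apply]
    ring
  rw [e]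
  exact h.add (convexOn_affine (-(r - p * a)) (-p))

lemma convexOn_measurable {χ : ℝ → ℝ} (h : ConvexOn ℝ univ χ) : Continuous χ := by
  rw [← continuousOn_univ]
  exact h.continuousOn isOpen_univ

section
variable {μ ν : Measure ℝ}

lemma integrable_affine [IsProbabilityMeasure μ] (hμ : Integrable id μ) (r p a : ℝ) :
    Integrable (fun z => r + p * (z - a)) μ :=
  (integrable_const r).add ((Integrable.sub hμ (integrable_const a)).const_mul p)

lemma mean_eq [IsProbabilityMeasure μ] [IsProbabilityMeasure ν] (hν : Integrable id ν)
    (hc : ConvexOrder μ ν) : ∫ z, z ∂μ = ∫ z, z ∂ν := by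
  have h1 := (hc (fun z => z) (by simpa using convexOn_affine 0 1) hν).2
  have h2 := (hc (fun z => -z) (by simpa using convexOn_affine 0 (-1)) hν.neg).2
  rw [integral_neg, integral_neg] at h2
  linarith

lemma affine_eq [IsProbabilityMeasure μ] [IsProbabilityMeasure ν] (hμ : Integrable id μ)
    (hν : Integrable id ν)
    (hc : ConvexOrder μ ν) (r p a : ℝ) :
    ∫ z, (r + p * (z - a)) ∂μ = ∫ z, (r + p * (z - a)) ∂ν := by
  have e : ∀ (ρ : Measure ℝ) [IsProbabilityMeasure ρ], Integrable id ρ →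
      ∫ z, (r + p * (z - a)) ∂ρ = r + p * (∫ z, z ∂ρ - a) := by
    intro ρ _ hρ
    have h1 : Integrable (fun z : ℝ => z) ρ := hρ
    have h2 : Integrable (fun z : ℝ => z - a) ρ := h1.sub (integrable_const a)
    rw [integral_add (integrable_const r) (h2.const_mul p),
      integral_const_mul, integral_sub h1 (integrable_const a)]
    simp
  rw [e μ hμ, e ν hν, mean_eq hν hc]

lemma integrable_abs_sub [IsProbabilityMeasure μ] (hμ : Integrable id μ) (k : ℝ) :
    Integrable (fun y => |k - y|) μ := by
  exact ((integrable_const k).sub hμ).abs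

lemma integrable_pos [IsProbabilityMeasure μ] (hμ : Integrable id μ) (k : ℝ) :
    Integrable (fun y => max (y - k) 0) μ := by
  exact (hμ.sub (integrable_const k)).pos_part

lemma integral_pos_eq [IsProbabilityMeasure μ] (hμ : Integrable id μ) (k : ℝ) :
    ∫ y, max (y - k) 0 ∂μ = (potential μ k + (∫ z, z ∂μ - k)) / 2 := by
  have e : ∀ y, max (y - k) 0 = (|k - y| + (y - k)) / 2 := by
    intro y
    rcases le_total y k with h | h
    · rw [max_eq_right (by linarith), abs_of_nonneg (by linarith)]; ring
    · rw [max_eq_left (by linarith), abs_of_nonpos (by linarith)]; ring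
  simp_rw [e]
  have h2 : Integrable (fun z : ℝ => z - k) μ := hμ.sub (integrable_const k)
  rw [integral_div, integral_add (integrable_abs_sub hμ k) h2, potential]
  congr 2
  rw [integral_sub (by exact hμ) (integrable_const k)]
  simp

/-- Key slope estimate. -/
lemma slope_bound [IsProbabilityMeasure μ] [IsProbabilityMeasure ν] (hμ : Integrable id μ)
    (hν : Integrable id ν) (hc : ConvexOrder μ ν) {χ : ℝ → ℝ} (hχ : ConvexOn ℝ univ χ)
    (hi : Integrable χ ν) {C : ℝ} (hC : ∫ z, χ z ∂ν - ∫ z, χ z ∂μ ≤ C) {a b p q : ℝ}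
    (hp : IsSub χ a p) (hq : IsSub χ b q) (hab : a < b) :
    (q - p) * ((potential ν b - potential μ b) / 2 - (b - a)) ≤ C := by
  set ga : ℝ → ℝ := fun z => χ z - (χ a + p * (z - a)) with hga
  set gb : ℝ → ℝ := fun z => χ z - (χ b + q * (z - b)) with hgb
  set A : ℝ → ℝ := fun z => if z ≤ a then ga z else 0 with hA
  set B : ℝ → ℝ := fun z => if b ≤ z then gb z else 0 with hB
  have gaI : Integrable ga ν := hi.sub (integrable_affine hν _ _ _)
  have gbI : Integrable gb ν := hi.sub (integrable_affine hν _ _ _)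
  have cA : ConvexOn ℝ univ A := convexOn_trunc_le (convexOn_sub_affine hχ _ _ _)
    (fun z => by have := hp z; linarith) (by simp)
  have cB : ConvexOn ℝ univ B := convexOn_trunc_ge (convexOn_sub_affine hχ _ _ _)
    (fun z => by have := hq z; linarith) (by simp)
  have iA : Integrable A ν := gaI.mono (convexOn_measurable cA).aestronglyMeasurable
    (.of_forall fun z => by simp only [hA]; split_ifs <;> simp)
  have iB : Integrable B ν := gbI.mono (convexOn_measurable cB).aestronglyMeasurable
    (.of_forall fun z => by simp only [hB]; split_ifs <;> simp)
  obtain ⟨iAμ, hAle⟩ := hc A cA iA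
  obtain ⟨iBμ, hBle⟩ := hc B cB iB
  obtain ⟨iχμ, -⟩ := hc χ hχ hi
  have gaIμ : Integrable ga μ := iχμ.sub (integrable_affine hμ _ _ _)
  have hs : 0 ≤ q - p := by linarith [hp.mono hq hab]
  have hH : ∀ z, (q - p) * max (z - b) 0 ≤ ga z - A z - B z ∧
      ga z - A z - B z ≤ (q - p) * max (z - a) 0 := by
    intro z
    have h1 := hp z
    have h2 := hq z
    have h3 := hp b
    have h4 := hq a
    simp only [hA, hB, hga, hgb]
    rcases le_or_gt z a with hza | hza
    · rw [if_pos hza, if_neg (by linarith), max_eq_right (by linarith), max_eq_right (by linarith)]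
      simp
    · rw [if_neg (by linarith), max_eq_left (a := z - a) (by linarith)]
      rcases le_or_gt b z with hzb | hzb
      · rw [if_pos hzb, max_eq_left (by linarith)]
        constructor <;> nlinarith
      · rw [if_neg (by linarith), max_eq_right (by linarith)]
        obtain ⟨r, hr⟩ := exists_isSub hχ z
        have h5 := hr.mono hq hzb
        have h6 := hr a
        constructor <;> nlinarith
  have e1 : ∫ z, (q - p) * max (z - b) 0 ∂ν ≤ ∫ z, (ga z - A z - B z) ∂ν :=
    integral_mono ((integrable_pos hν b).const_mul _) ((gaI.sub iA).sub iB) (fun z => (hH z).1)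
  have e2 : ∫ z, (ga z - A z - B z) ∂μ ≤ ∫ z, (q - p) * (max (z - b) 0 + (b - a)) ∂μ := by
    refine integral_mono ((gaIμ.sub iAμ).sub iBμ)
      (((integrable_pos hμ b).add (integrable_const _)).const_mul _) (fun z => (hH z).2.trans ?_)
    refine mul_le_mul_of_nonneg_left ?_ hs
    refine max_le ?_ ?_
    · linarith [le_max_left (z - b) 0]
    · linarith [le_max_right (z - b) 0]
  have gA : Integrable (fun z => ga z - A z) ν := gaI.sub iA
  have gAμ : Integrable (fun z => ga z - A z) μ := gaIμ.sub iAμ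
  rw [integral_sub gA iB, integral_sub gaI iA,
    integral_sub hi (integrable_affine hν _ _ _), integral_const_mul, integral_pos_eq hν] at e1
  rw [integral_sub gAμ iBμ, integral_sub gaIμ iAμ,
    integral_sub iχμ (integrable_affine hμ _ _ _), integral_const_mul,
    integral_add (integrable_pos hμ b) (integrable_const _), integral_pos_eq hμ] at e2
  have e3 := affine_eq hμ hν hc (χ a) p a
  have e4 := mean_eq hν hc
  simp only [integral_const, smul_eq_mul, probReal_univ, one_mul] at e2
  rw [e4] at e2
  nlinarith

end
end

noncomputable section

/-- Standing assumptions on the pair of marginals. -/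
structure Irr (μ ν : Measure ℝ) : Prop where
  pμ : IsProbabilityMeasure μ
  pν : IsProbabilityMeasure ν
  iμ : Integrable id μ
  iν : Integrable id ν
  co : ConvexOrder μ ν
  op : IsOpen {x | potential μ x < potential ν x}
  oc : OrdConnected {x | potential μ x < potential ν x}
  ae : ∀ᵐ x ∂μ, potential μ x < potential ν x

lemma integral_map_neg (μ : Measure ℝ) (f : ℝ → ℝ) :
    ∫ x, f x ∂(μ.map Neg.neg) = ∫ x, f (-x) ∂μ :=
  (MeasurableEquiv.neg ℝ).measurableEmbedding.integral_map f

lemma potential_neg (μ : Measure ℝ) (x : ℝ) :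
    potential (μ.map Neg.neg) x = potential μ (-x) := by
  unfold potential
  rw [integral_map_neg]
  refine integral_congr_ae (.of_forall fun y => ?_)
  beta_reduce
  rw [← abs_neg]; congr 1; ring

lemma integrable_map_neg (μ : Measure ℝ) (f : ℝ → ℝ) :
    Integrable f (μ.map Neg.neg) ↔ Integrable (fun x => f (-x)) μ :=
  (MeasurableEquiv.neg ℝ).measurableEmbedding.integrable_map_iff

lemma Irr.neg {μ ν : Measure ℝ} (h : Irr μ ν) : Irr (μ.map Neg.neg) (ν.map Neg.neg) := by
  have := h.pμ
  have := h.pν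
  refine ⟨Measure.isProbabilityMeasure_map measurable_neg.aemeasurable,
    Measure.isProbabilityMeasure_map measurable_neg.aemeasurable, ?_, ?_, ?_, ?_, ?_, ?_⟩
  · rw [integrable_map_neg]; exact h.iμ.neg
  · rw [integrable_map_neg]; exact h.iν.neg
  · intro f hf hi
    rw [integrable_map_neg] at hi
    rw [integrable_map_neg, integral_map_neg, integral_map_neg]
    exact h.co _ (convexOn_neg_comp hf) hi
  · simp only [potential_neg]
    exact h.op.preimage continuous_neg
  · simp only [potential_neg]
    refine ⟨fun x hx y hy z hz => ?_⟩
    exact h.oc.out hy hx ⟨neg_le_neg hz.2, neg_le_neg hz.1⟩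
  · simp only [potential_neg]
    refine (ae_map_iff (p := fun x => potential μ (-x) < potential ν (-x))
      measurable_neg.aemeasurable ?_).2 ?_
    · exact (h.op.preimage continuous_neg).measurableSet
    · simpa using h.ae

/-- The class of normalised convex moderators. -/
structure Moder (μ ν : Measure ℝ) (x₀ C : ℝ) (χ : ℝ → ℝ) : Prop where
  cv : ConvexOn ℝ univ χ
  nn : ∀ x, 0 ≤ χ x
  z : χ x₀ = 0
  int : Integrable χ ν
  le : ∫ z, χ z ∂ν - ∫ z, χ z ∂μ ≤ C

lemma Moder.neg {μ ν : Measure ℝ} {x₀ C : ℝ} {χ : ℝ → ℝ} (h : Moder μ ν x₀ C χ) :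
    Moder (μ.map Neg.neg) (ν.map Neg.neg) (-x₀) C (fun x => χ (-x)) := by
  refine ⟨convexOn_neg_comp h.cv, fun x => h.nn _, by simpa using h.z, ?_, ?_⟩
  · rw [integrable_map_neg]; simpa using h.int
  · rw [integral_map_neg, integral_map_neg]; simpa using h.le

lemma potential_lip {μ : Measure ℝ} [IsProbabilityMeasure μ] (hμ : Integrable id μ) :
    LipschitzWith 1 (potential μ) := by
  refine LipschitzWith.of_le_add fun a b => ?_
  unfold potential
  have : ∫ y, |a - y| ∂μ ≤ ∫ y, (|b - y| + dist a b) ∂μ := by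
    refine integral_mono (integrable_abs_sub hμ a)
      ((integrable_abs_sub hμ b).add (integrable_const _)) (fun y => ?_)
    have := abs_add_le (b - y) (a - b)
    rw [Real.dist_eq]
    rwa [show b - y + (a - b) = a - y by ring] at this
  rw [integral_add (integrable_abs_sub hμ b) (integrable_const _)] at this
  simpa using this

section
variable {μ ν : Measure ℝ}

lemma two_point (h : Irr μ ν) {χ : ℝ → ℝ} {x₀ C : ℝ} (hχ : Moder μ ν x₀ C χ) {δ a b p q : ℝ}
    (hδ : 0 < δ) (hUa : δ ≤ potential ν a - potential μ a)
    (hUb : δ ≤ potential ν b - potential μ b)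
    (hd : |a - b| ≤ δ / 4) (hab : a ≠ b) (hp : IsSub χ a p) (hq : IsSub χ b q) :
    |q - p| ≤ 4 * C / δ := by
  have := h.pμ
  have := h.pν
  rw [le_div_iff₀ hδ]
  rw [abs_le] at hd
  rcases lt_or_gt_of_ne hab with hlt | hlt
  · have h1 := slope_bound h.iμ h.iν h.co hχ.cv hχ.int hχ.le hp hq hlt
    have h2 := hp.mono hq hlt
    rw [abs_of_nonneg (by linarith)]
    nlinarith
  · have h1 := slope_bound h.iμ h.iν h.co hχ.cv hχ.int hχ.le hq hp hlt
    have h2 := hq.mono hp hlt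
    rw [abs_of_nonpos (by linarith)]
    nlinarith

lemma chain_bound (h : Irr μ ν) {x₀ C y : ℝ} (hx : potential μ x₀ < potential ν x₀)
    (hy : potential μ y < potential ν y) :
    ∃ K, ∀ χ, Moder μ ν x₀ C χ → ∃ q, IsSub χ y q ∧ |q| ≤ K := by
  have := h.pμ
  have := h.pν
  have sub0 : ∀ χ, Moder μ ν x₀ C χ → IsSub χ x₀ 0 := by
    intro χ hχ z
    rw [hχ.z]; simpa using hχ.nn z
  rcases eq_or_ne y x₀ with rfl | hne
  · exact ⟨0, fun χ hχ => ⟨0, sub0 χ hχ, by simp⟩⟩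
  have hcont : Continuous (fun x => potential ν x - potential μ x) :=
    (potential_lip h.iν).continuous.sub (potential_lip h.iμ).continuous
  obtain ⟨k, hk, hkm⟩ := isCompact_uIcc.exists_isMinOn (s := uIcc x₀ y) nonempty_uIcc
    hcont.continuousOn
  set δ := potential ν k - potential μ k with hδdef
  have hδ : 0 < δ := by
    have : k ∈ {x | potential μ x < potential ν x} := h.oc.uIcc_subset hx hy hk
    simp only [mem_ofPred_eq] at this
    linarith
  obtain ⟨m, hm⟩ := exists_nat_gt (4 * |y - x₀| / δ)
  have hm0 : (0 : ℝ) < m := lt_of_le_of_lt (by positivity) hm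
  set t : ℕ → ℝ := fun i => x₀ + (i / m) * (y - x₀) with ht
  have htmem : ∀ i ≤ m, t i ∈ uIcc x₀ y := by
    intro i hi
    have h1 : (i : ℝ) / m ≤ 1 := by
      rw [div_le_one hm0]; exact_mod_cast hi
    have h0 : 0 ≤ (i : ℝ) / m := by positivity
    rw [mem_uIcc]
    rcases le_total x₀ y with hxy | hxy
    · left; constructor <;> simp only [ht] <;> nlinarith
    · right; constructor <;> simp only [ht] <;> nlinarith
  refine ⟨m * (4 * C / δ), fun χ hχ => ?_⟩
  have main : ∀ i ≤ m, ∃ q, IsSub χ (t i) q ∧ |q| ≤ i * (4 * C / δ) := by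
    intro i
    induction i with
    | zero => intro _; exact ⟨0, by simpa [ht] using sub0 χ hχ, by simp⟩
    | succ i ih =>
      intro hi
      obtain ⟨p, hp, hpb⟩ := ih (by omega)
      obtain ⟨q, hq⟩ := exists_isSub hχ.cv (t (i + 1))
      have hdiff : t i - t (i + 1) = - ((y - x₀) / m) := by
        simp only [ht]; push_cast; field_simp; ring
      have hb := two_point h hχ hδ (hkm (htmem i (by omega))) (hkm (htmem (i + 1) hi)) (by
          rw [hdiff, abs_neg, abs_div, abs_of_pos hm0, div_le_iff₀ hm0]
          rw [div_lt_iff₀ hδ] at hm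
          linarith) (by
          rw [← sub_ne_zero, hdiff, neg_ne_zero]
          exact div_ne_zero (sub_ne_zero.2 hne) hm0.ne') hp hq
      refine ⟨q, hq, ?_⟩
      push_cast
      calc |q| = |p + (q - p)| := by congr 1; ring
        _ ≤ |p| + |q - p| := abs_add_le _ _
        _ ≤ _ := by linarith
  obtain ⟨q, hq, hqb⟩ := main m le_rfl
  refine ⟨q, ?_, hqb⟩
  have : t m = y := by simp only [ht]; field_simp; ring
  rwa [this] at hq

lemma bound_interior (h : Irr μ ν) {x₀ C y : ℝ} (hx : potential μ x₀ < potential ν x₀)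
    (hy : potential μ y < potential ν y) :
    ∃ K, ∀ χ, Moder μ ν x₀ C χ → χ y ≤ K := by
  obtain ⟨K, hK⟩ := chain_bound (C := C) h hx hy
  refine ⟨K * |y - x₀|, fun χ hχ => ?_⟩
  obtain ⟨q, hq, hqK⟩ := hK χ hχ
  have h1 := hq x₀
  rw [hχ.z] at h1
  calc χ y ≤ q * (y - x₀) := by linarith
    _ ≤ |q * (y - x₀)| := le_abs_self _
    _ = |q| * |y - x₀| := abs_mul _ _
    _ ≤ _ := by gcongr

lemma lt_of_right (h : Irr μ ν) {x₀ y z : ℝ} (hx : potential μ x₀ < potential ν x₀)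
    (hxy : x₀ < y) (hy : ¬ potential μ y < potential ν y) (hz : potential μ z < potential ν z) :
    z < y := by
  by_contra! hle
  exact hy (h.oc.out hx hz ⟨hxy.le, hle⟩)

lemma bound_right (h : Irr μ ν) {x₀ C y : ℝ} (hx : potential μ x₀ < potential ν x₀)
    (hxy : x₀ < y) (hy : ¬ potential μ y < potential ν y) (hν : ν {y} ≠ 0) :
    ∃ K, ∀ χ, Moder μ ν x₀ C χ → χ y ≤ K := by
  have := h.pμ
  have := h.pν
  -- choose a point a of I with small right mass
  obtain ⟨a, ha, hamass⟩ : ∃ a, potential μ a < potential ν a ∧ μ (Ioi a) < ν {y} := by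
    set I := {x | potential μ x < potential ν x} with hI
    have hne : I.Nonempty := ⟨x₀, hx⟩
    have hbdd : BddAbove I := ⟨y, fun z hz => (lt_of_right h hx hxy hy hz).le⟩
    obtain ⟨u, humono, hutend, huI⟩ := exists_seq_tendsto_sSup hne hbdd
    have hT : Filter.Tendsto (fun n => μ (Ioi (u n))) Filter.atTop (nhds (μ (⋂ n, Ioi (u n)))) :=
      tendsto_measure_iInter_atTop (fun n => measurableSet_Ioi.nullMeasurableSet)
        (fun i j hij => Ioi_subset_Ioi (humono hij)) ⟨0, measure_ne_top _ _⟩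
    have h0 : μ (⋂ n, Ioi (u n)) = 0 := by
      refine measure_mono_null ?_ (ae_iff.1 h.ae)
      intro z hz hzI
      obtain ⟨w, hw⟩ := (h.op.mem_nhds hzI) |> fun hn => (mem_nhds_iff_exists_Ioo_subset.1 hn)
      obtain ⟨r, hwr, hsub⟩ := hw
      obtain ⟨z', hz1, hz2⟩ := exists_between hwr.2
      have hz'I : z' ∈ I := hsub ⟨hwr.1.trans hz1, hz2⟩
      have h3 : sSup I ≤ z := le_of_tendsto' hutend fun n => (mem_iInter.1 hz n).le
      linarith [le_csSup hbdd hz'I]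
    rw [h0] at hT
    obtain ⟨n, hn⟩ := ((tendsto_order.1 hT).2 _ (pos_iff_ne_zero.2 hν)).exists
    exact ⟨u n, huI n, hn⟩
  obtain ⟨K1, hK1⟩ := chain_bound (C := C) h hx ha
  obtain ⟨K2, hK2⟩ := bound_interior (C := C) h hx ha
  have hay := lt_of_right h hx hxy hy ha
  set e := ν.real {y} - μ.real (Ioi a) with he
  have he0 : 0 < e := by
    have : μ.real (Ioi a) < ν.real {y} :=
      (ENNReal.toReal_lt_toReal (measure_ne_top _ _) (measure_ne_top _ _)).2 hamass
    linarith
  refine ⟨K2 + K1 * (y - a) + C / e, fun χ hχ => ?_⟩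
  obtain ⟨p, hp, hpK⟩ := hK1 χ hχ
  have hχa := hK2 χ hχ
  set g : ℝ → ℝ := fun z => χ z - (χ a + p * (z - a)) with hg
  set A : ℝ → ℝ := fun z => if z ≤ a then g z else 0 with hA
  have g0 : ∀ z, 0 ≤ g z := fun z => by have := hp z; simp only [hg]; linarith
  have gcv : ConvexOn ℝ univ g := convexOn_sub_affine hχ.cv _ _ _
  have ga0 : g a = 0 := by simp [hg]
  have gI : Integrable g ν := hχ.int.sub (integrable_affine h.iν _ _ _)
  have cA : ConvexOn ℝ univ A := convexOn_trunc_le gcv g0 ga0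
  have iA : Integrable A ν := gI.mono (convexOn_measurable cA).aestronglyMeasurable
    (.of_forall fun z => by simp only [hA]; split_ifs <;> simp)
  obtain ⟨iAμ, hAle⟩ := h.co A cA iA
  obtain ⟨iχμ, -⟩ := h.co χ hχ.cv hχ.int
  have gIμ : Integrable g μ := iχμ.sub (integrable_affine h.iμ _ _ _)
  have e1 : ∫ z, ({y} : Set ℝ).indicator (fun _ => g y) z ∂ν ≤ ∫ z, (g z - A z) ∂ν := by
    refine integral_mono ((integrable_const _).indicator (measurableSet_singleton y))
      (gI.sub iA) (fun z => ?_)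
    by_cases hz : z = y
    · subst hz
      simp [hA, not_le.2 hay]
    · simp only [indicator, mem_singleton_iff, hz, if_false, hA]
      split_ifs
      · simp
      · simpa using g0 z
  have e2 : ∫ z, (g z - A z) ∂μ ≤ ∫ z, (Ioi a).indicator (fun _ => g y) z ∂μ := by
    refine integral_mono_ae (gIμ.sub iAμ) ((integrable_const _).indicator measurableSet_Ioi) ?_
    filter_upwards [h.ae] with z hz
    have hzy := lt_of_right h hx hxy hy hz
    simp only [indicator, mem_Ioi, hA]
    rcases le_or_gt z a with hza | hza
    · rw [if_pos hza, if_neg (by linarith)]; simp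
    · rw [if_neg (by linarith), if_pos hza]
      obtain ⟨r, hr⟩ := exists_isSub gcv z
      have h1 := hr a
      have h2 := hr y
      have h3 := g0 z
      have : 0 ≤ r := by
        by_contra! hlt
        nlinarith
      nlinarith
  rw [integral_indicator (measurableSet_singleton y), integral_sub gI iA,
    integral_sub hχ.int (integrable_affine h.iν _ _ _)] at e1
  rw [integral_indicator measurableSet_Ioi, integral_sub gIμ iAμ,
    integral_sub iχμ (integrable_affine h.iμ _ _ _)] at e2
  simp only [integral_const, smul_eq_mul, MeasurableSet.univ, measureReal_restrict_apply,
    univ_inter] at e1 e2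
  have e3 := affine_eq h.iμ h.iν h.co (χ a) p a
  have e4 := hχ.le
  have e5 : g y * e ≤ C := by rw [he]; nlinarith
  have e6 : g y ≤ C / e := by rwa [le_div_iff₀ he0]
  have e7 : p * (y - a) ≤ K1 * (y - a) := by
    have := (le_abs_self p).trans hpK
    have : 0 ≤ y - a := by linarith
    gcongr
  simp only [hg] at e6
  linarith

lemma bound_ae_pt (h : Irr μ ν) {x₀ C y : ℝ} (hx : potential μ x₀ < potential ν x₀)
    (hy : potential μ y < potential ν y ∨ ν {y} ≠ 0) :
    ∃ K, ∀ χ, Moder μ ν x₀ C χ → χ y ≤ K := by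
  by_cases hyI : potential μ y < potential ν y
  · exact bound_interior h hx hyI
  have hν := hy.resolve_left hyI
  rcases lt_trichotomy x₀ y with hlt | rfl | hlt
  · exact bound_right h hx hlt hyI hν
  · exact absurd hx hyI
  · obtain ⟨K, hK⟩ := bound_right (C := C) h.neg (x₀ := -x₀) (y := -y)
      (by simpa [potential_neg] using hx) (by linarith) (by simpa [potential_neg] using hyI) (by
        rw [Measure.map_apply measurable_neg (measurableSet_singleton _)]
        convert hν using 2
        ext z; simp)
    exact ⟨K, fun χ hχ => by simpa using hK _ hχ.neg⟩

lemma right_null (h : Irr μ ν) {x₀ y : ℝ} (hx : potential μ x₀ < potential ν x₀)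
    (hxy : x₀ < y) (hy : ¬ potential μ y < potential ν y) : ν (Ioi y) = 0 := by
  have := h.pμ
  have := h.pν
  have h1 := integral_pos_eq h.iμ y
  have h2 := integral_pos_eq h.iν y
  have h3 := mean_eq h.iν h.co
  have h4 : ∫ z, max (z - y) 0 ∂μ = 0 := by
    refine integral_eq_zero_of_ae ?_
    filter_upwards [h.ae] with z hz
    exact max_eq_right (sub_nonpos.2 (lt_of_right h hx hxy hy hz).le)
  have h5 : 0 ≤ ∫ z, max (z - y) 0 ∂ν := integral_nonneg fun z => le_max_right _ _
  have h6 : ∫ z, max (z - y) 0 ∂ν = 0 := by linarith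
  replace h6 := (integral_eq_zero_iff_of_nonneg (f := fun z => max (z - y) 0)
    (fun z => le_max_right _ _) (integrable_pos h.iν y)).1 h6
  refine measure_mono_null ?_ (ae_iff.1 h6)
  intro z hz
  simp only [mem_Ioi] at hz
  simp only [Pi.zero_apply, mem_ofPred_eq]
  intro h7
  linarith [le_max_left (z - y) 0]

lemma ae_right (h : Irr μ ν) {x₀ : ℝ} (hx : potential μ x₀ < potential ν x₀) :
    ν {y | x₀ < y ∧ ¬ (potential μ y < potential ν y ∨ ν {y} ≠ 0)} = 0 := by
  set N := {y | x₀ < y ∧ ¬ potential μ y < potential ν y} with hN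
  rcases N.eq_empty_or_nonempty with hemp | hne
  · refine measure_mono_null (t := N) ?_ (by rw [hemp]; simp)
    intro y hy
    exact ⟨hy.1, fun h' => hy.2 (Or.inl h')⟩
  have hbdd : BddBelow N := ⟨x₀, fun y hy => hy.1.le⟩
  have hbN : sInf N ∈ N := by
    have hcl : IsClosed {y | ¬ potential μ y < potential ν y} := by
      rw [← isOpen_compl_iff]
      convert h.op using 1
      ext z; simp
    have h1 : sInf N ∈ {y | ¬ potential μ y < potential ν y} :=
      hcl.closure_subset_iff.2 (fun z hz => hz.2) (csInf_mem_closure hne hbdd)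
    refine ⟨?_, h1⟩
    refine lt_of_le_of_ne (le_csInf hne fun y hy => hy.1.le) ?_
    intro h2
    rw [← h2] at h1
    exact h1 hx
  have h0 := right_null h hx hbN.1 hbN.2
  by_cases hb : ν {sInf N} = 0
  · refine measure_mono_null (t := {sInf N} ∪ Ioi (sInf N)) ?_ (measure_union_null hb h0)
    intro y hy
    have hyN : y ∈ N := ⟨hy.1, fun h' => hy.2 (Or.inl h')⟩
    rcases (csInf_le hbdd hyN).eq_or_lt with h3 | h3
    · left; exact h3.symm
    · right; exact h3
  · refine measure_mono_null (t := Ioi (sInf N)) ?_ h0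
    intro y hy
    have hyN : y ∈ N := ⟨hy.1, fun h' => hy.2 (Or.inl h')⟩
    rcases (csInf_le hbdd hyN).eq_or_lt with h3 | h3
    · exact absurd (Or.inr (by rwa [← h3])) hy.2
    · exact h3

lemma ae_good (h : Irr μ ν) {x₀ : ℝ} (hx : potential μ x₀ < potential ν x₀) :
    ∀ᵐ y ∂ν, potential μ y < potential ν y ∨ ν {y} ≠ 0 := by
  have h1 := ae_right h hx
  have h2 := ae_right h.neg (x₀ := -x₀) (by simpa [potential_neg] using hx)
  have e : ∀ z, ν.map Neg.neg {z} = ν {-z} := by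
    intro z
    rw [Measure.map_apply measurable_neg (measurableSet_singleton _)]
    congr 1
    ext w; simp
  have e2 : ∀ S : Set ℝ, ν.map Neg.neg S = ν (Neg.neg ⁻¹' S) := fun S =>
    (MeasurableEquiv.neg ℝ).map_apply S
  rw [e2] at h2
  refine measure_mono_null ?_ (measure_union_null h1 h2)
  intro y hy
  rcases lt_trichotomy x₀ y with hlt | rfl | hlt
  · left; exact ⟨hlt, hy⟩
  · exact absurd (Or.inl hx) hy
  · right
    simp only [mem_preimage, mem_ofPred_eq, potential_neg, e]
    refine ⟨by linarith, ?_⟩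
    simpa using hy

/-- There is `ν`-mass strictly to the right of every point of `I`. -/
lemma mass_right (h : Irr μ ν) {x : ℝ} (hx : potential μ x < potential ν x) : ν (Ioi x) ≠ 0 := by
  intro h0
  have := h.pμ
  have := h.pν
  have h1 := integral_pos_eq h.iμ x
  have h2 := integral_pos_eq h.iν x
  have h3 := mean_eq h.iν h.co
  have h4 : ∫ z, max (z - x) 0 ∂ν = 0 := by
    refine integral_eq_zero_of_ae ?_
    have : ∀ᵐ z ∂ν, z ∉ Ioi x := measure_eq_zero_iff_ae_notMem.1 h0
    filter_upwards [this] with z hz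
    exact max_eq_right (sub_nonpos.2 (not_lt.1 (fun h' => hz h')))
  have h5 : 0 ≤ ∫ z, max (z - x) 0 ∂μ := integral_nonneg fun z => le_max_right _ _
  linarith

lemma mass_left (h : Irr μ ν) {x : ℝ} (hx : potential μ x < potential ν x) : ν (Iio x) ≠ 0 := by
  have := mass_right h.neg (x := -x) (by simpa [potential_neg] using hx)
  rw [(MeasurableEquiv.neg ℝ).map_apply (Ioi (-x)) |> fun e => (show
    ν.map Neg.neg (Ioi (-x)) = ν (Neg.neg ⁻¹' (Ioi (-x))) from e)] at this
  convert this using 2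
  ext z; simp

end
end

noncomputable section

lemma ae_tendsto_zero {Ω : Type*} [MeasurableSpace Ω] {P : Measure Ω} {f : ℕ → Ω → ℝ}
    (h0 : ∀ n ω, 0 ≤ f n ω) (hi : ∀ n, Integrable (f n) P) {B r : ℝ} (hr0 : 0 ≤ r) (hr1 : r < 1)
    (hB : ∀ n, ∫ ω, f n ω ∂P ≤ B * r ^ n) :
    ∀ᵐ ω ∂P, Filter.Tendsto (fun n => f n ω) Filter.atTop (nhds 0) := by
  have hB0 : 0 ≤ B := by
    have := hB 0
    have h1 : 0 ≤ ∫ ω, f 0 ω ∂P := integral_nonneg (h0 0)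
    simp at this
    linarith
  have hsum : ∑' n, ∫⁻ ω, ENNReal.ofReal (f n ω) ∂P ≠ ⊤ := by
    have hle : ∑' n, ∫⁻ ω, ENNReal.ofReal (f n ω) ∂P ≤ ∑' n, ENNReal.ofReal (B * r ^ n) := by
      refine ENNReal.tsum_le_tsum fun n => ?_
      rw [← ofReal_integral_eq_lintegral_ofReal (hi n) (.of_forall (h0 n))]
      exact ENNReal.ofReal_le_ofReal (hB n)
    refine ne_top_of_le_ne_top ?_ hle
    rw [← ENNReal.ofReal_tsum_of_nonneg (fun n => by positivity)
      ((summable_geometric_of_lt_one hr0 hr1).mul_left B)]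
    exact ENNReal.ofReal_ne_top
  have hm : ∀ n, AEMeasurable (fun ω => ENNReal.ofReal (f n ω)) P :=
    fun n => (hi n).aestronglyMeasurable.aemeasurable.ennreal_ofReal
  rw [← lintegral_tsum hm] at hsum
  filter_upwards [ae_lt_top' (AEMeasurable.ennreal_tsum hm) hsum] with ω hω
  have h1 := ENNReal.tendsto_atTop_zero_of_tsum_ne_top hω.ne
  have h2 := (ENNReal.tendsto_toReal ENNReal.zero_ne_top).comp h1
  refine h2.congr fun n => ?_
  simp [h0 n ω]

lemma ae_not_tendsto_top {Ω : Type*} [MeasurableSpace Ω] {P : Measure Ω} {f : ℕ → Ω → ℝ}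
    (hm' : ∀ n, Measurable (f n)) (h0 : ∀ n ω, 0 ≤ f n ω) (hi : ∀ n, Integrable (f n) P) {B : ℝ}
    (hB : ∀ n, ∫ ω, f n ω ∂P ≤ B) :
    ∀ᵐ ω ∂P, ¬ Filter.Tendsto (fun n => f n ω) Filter.atTop Filter.atTop := by
  have hm : ∀ n, Measurable (fun ω => ENNReal.ofReal (f n ω)) :=
    fun n => (hm' n).ennreal_ofReal
  have h1 : ∫⁻ ω, Filter.liminf (fun n => ENNReal.ofReal (f n ω)) Filter.atTop ∂P
      ≤ ENNReal.ofReal B := by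
    refine (lintegral_liminf_le hm).trans ?_
    refine Filter.liminf_le_of_le (by isBoundedDefault) fun b hb => ?_
    obtain ⟨n, hn⟩ := hb.exists
    refine hn.trans ?_
    rw [← ofReal_integral_eq_lintegral_ofReal (hi n) (.of_forall (h0 n))]
    exact ENNReal.ofReal_le_ofReal (hB n)
  filter_upwards [ae_lt_top (Measurable.liminf hm)
    (ne_top_of_le_ne_top ENNReal.ofReal_ne_top h1)] with ω hω ht
  have h2 := (ENNReal.tendsto_ofReal_atTop.comp ht).liminf_eq
  simp only [Function.comp_def] at h2
  rw [h2] at hω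
  exact lt_irrefl _ hω

open Real in
lemma komlos {E Ω : Type*} [AddCommGroup E] [Module ℝ E] [MeasurableSpace Ω] (P : Measure Ω)
    [IsFiniteMeasure P] (D : ℕ → Set E) (hne : ∀ n, (D n).Nonempty) (hanti : Antitone D)
    (hconv : ∀ n, ∀ a ∈ D n, ∀ b ∈ D n, (1 / 2 : ℝ) • (a + b) ∈ D n) (T : E → Ω → ℝ)
    (hT : ∀ a b ω, T ((1 / 2 : ℝ) • (a + b)) ω = (T a ω + T b ω) / 2)
    (hm : ∀ a ∈ D 0, Measurable (T a)) (h0 : ∀ a ∈ D 0, ∀ ω, 0 ≤ T a ω) :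
    ∃ a : ℕ → E, (∀ n, a n ∈ D n) ∧
      ∀ᵐ ω ∂P, ∃ l, Filter.Tendsto (fun n => exp (-(T (a n) ω) / 2)) Filter.atTop (nhds l) := by
  have hD0 : ∀ n, D n ⊆ D 0 := fun n => hanti (Nat.zero_le n)
  set J : E → ℝ := fun a => ∫ ω, exp (-(T a ω)) ∂P with hJ
  have hIntg : ∀ a ∈ D 0, Integrable (fun ω => exp (-(T a ω))) P := by
    intro a ha
    refine Integrable.of_bound (C := 1) ((hm a ha).neg.exp.aestronglyMeasurable)
      (.of_forall fun ω => ?_)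
    rw [Real.norm_eq_abs, abs_of_pos (exp_pos _), exp_le_one_iff]
    linarith [h0 a ha ω]
  have hJ0 : ∀ a, 0 ≤ J a := fun a => integral_nonneg fun ω => (exp_pos _).le
  set d : ℕ → ℝ := fun n => sInf (J '' D n) with hd
  have hbb : ∀ n, BddBelow (J '' D n) := fun n => ⟨0, by rintro _ ⟨a, _, rfl⟩; exact hJ0 a⟩
  have hdle : ∀ n, ∀ a ∈ D n, d n ≤ J a := fun n a ha => csInf_le (hbb n) ⟨a, ha, rfl⟩
  have hdmono : Monotone d := fun n m hnm =>
    csInf_le_csInf (hbb n) ((hne m).image J) (image_mono (hanti hnm))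
  have hdbdd : BddAbove (range d) := by
    refine ⟨P.real univ, ?_⟩
    rintro _ ⟨n, rfl⟩
    obtain ⟨a, ha⟩ := hne n
    refine (hdle n a ha).trans ?_
    have : J a ≤ ∫ _, (1 : ℝ) ∂P := by
      refine integral_mono (hIntg a (hD0 n ha)) (integrable_const _) fun ω => ?_
      simp only [exp_le_one_iff]
      linarith [h0 a (hD0 n ha) ω]
    simpa using this
  have hdt := tendsto_atTop_ciSup hdmono hdbdd
  set dd := ⨆ n, d n
  have hchoose : ∀ n : ℕ, ∃ a ∈ D n, J a < d n + 1 / ((n : ℝ) + 1) := by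
    intro n
    obtain ⟨_, ⟨a, ha, rfl⟩, h⟩ := exists_lt_of_csInf_lt ((hne n).image J)
      (show sInf (J '' D n) < d n + 1 / ((n : ℝ) + 1) by
        have : (0 : ℝ) < 1 / ((n : ℝ) + 1) := by positivity
        simp only [hd]; linarith)
    exact ⟨a, ha, h⟩
  choose a ha haJ using hchoose
  set e : ℕ → Ω → ℝ := fun n ω => exp (-(T (a n) ω) / 2) with he
  set η : ℕ → ℝ := fun n => 2 * (1 / ((n : ℝ) + 1)) + (dd - d n) with hη
  have ha0 : ∀ n, a n ∈ D 0 := fun n => hD0 n (ha n)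
  have hid : ∀ n m ω, (e n ω - e m ω) ^ 2 = exp (-(T (a n) ω)) + exp (-(T (a m) ω))
      - 2 * exp (-(T ((1 / 2 : ℝ) • (a n + a m)) ω)) := by
    intro n m ω
    have h1 : exp (-(T (a n) ω)) = e n ω ^ 2 := by
      simp only [he]; rw [← Real.exp_nat_mul]; congr 1; push_cast; ring
    have h2 : exp (-(T (a m) ω)) = e m ω ^ 2 := by
      simp only [he]; rw [← Real.exp_nat_mul]; congr 1; push_cast; ring
    have h3 : exp (-(T ((1 / 2 : ℝ) • (a n + a m)) ω)) = e n ω * e m ω := by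
      rw [hT]; simp only [he]; rw [← Real.exp_add]; congr 1; ring
    rw [h1, h2, h3]; ring
  have hint2 : ∀ n m, Integrable (fun ω => (e n ω - e m ω) ^ 2) P := by
    intro n m
    simp_rw [hid]
    exact ((hIntg _ (ha0 n)).add (hIntg _ (ha0 m))).sub
      ((hIntg _ (hconv 0 _ (ha0 n) _ (ha0 m))).const_mul 2)
  have hcau : ∀ n m, n ≤ m → ∫ ω, (e n ω - e m ω) ^ 2 ∂P ≤ η n := by
    intro n m hnm
    have h1 : ∫ ω, (e n ω - e m ω) ^ 2 ∂P
        = J (a n) + J (a m) - 2 * J ((1 / 2 : ℝ) • (a n + a m)) := by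
      simp_rw [hid]
      have h12 : Integrable (fun ω => exp (-(T (a n) ω)) + exp (-(T (a m) ω))) P :=
        (hIntg _ (ha0 n)).add (hIntg _ (ha0 m))
      rw [integral_sub h12
        ((hIntg _ (hconv 0 _ (ha0 n) _ (ha0 m))).const_mul 2), integral_add (hIntg _ (ha0 n))
        (hIntg _ (ha0 m)), integral_const_mul]
    have h2 := hdle n _ (hconv n _ (ha n) _ (hanti hnm (ha m)))
    have h3 := haJ n
    have h4 := haJ m
    have h5 : 1 / ((m : ℝ) + 1) ≤ 1 / ((n : ℝ) + 1) := by
      have : (n : ℝ) ≤ m := by exact_mod_cast hnm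
      gcongr
    have h6 : d m ≤ dd := le_ciSup hdbdd m
    rw [h1]
    simp only [hη]
    linarith
  have hηt : Filter.Tendsto η Filter.atTop (nhds 0) := by
    have h1 := (tendsto_one_div_add_atTop_nhds_zero_nat (𝕜 := ℝ)).const_mul 2
    have h2 := hdt.const_sub dd
    have h3 := h1.add h2
    simpa [hη] using h3
  obtain ⟨k, hk, hkη⟩ := Filter.extraction_forall_of_eventually (P := fun n k => η k ≤ (1 / 16) ^ n)
    (fun n => hηt.eventually (Iic_mem_nhds (by positivity)))
  refine ⟨fun n => a (k n), fun n => hanti (hk.id_le n) (ha (k n)), ?_⟩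
  have hae := ae_tendsto_zero (P := P) (f := fun n ω => 4 ^ n * (e (k n) ω - e (k (n + 1)) ω) ^ 2)
    (fun n ω => by positivity) (fun n => (hint2 _ _).const_mul _) (B := 1) (r := 1 / 4)
    (by norm_num) (by norm_num) (fun n => by
      rw [integral_const_mul]
      have h1 := (hcau (k n) (k (n + 1)) (hk.monotone (Nat.le_succ n))).trans (hkη n)
      calc _ ≤ (4 : ℝ) ^ n * (1 / 16) ^ n := by gcongr
        _ = 1 * (1 / 4) ^ n := by rw [← mul_pow]; norm_num)
  filter_upwards [hae] with ω hω
  obtain ⟨M, hM⟩ := hω.bddAbove_range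
  have hMb : ∀ n, 4 ^ n * (e (k n) ω - e (k (n + 1)) ω) ^ 2 ≤ M := fun n => hM ⟨n, rfl⟩
  have hM0 : 0 ≤ M := le_trans (by positivity) (hMb 0)
  have hc : CauchySeq (fun n => e (k n) ω) := by
    refine cauchySeq_of_le_geometric (1 / 2) (√M) (by norm_num) fun n => ?_
    rw [Real.dist_eq]
    refine abs_le_of_sq_le_sq ?_ (by positivity)
    rw [mul_pow, Real.sq_sqrt hM0, ← pow_mul, mul_comm n 2, pow_mul]
    have h1 := hMb n
    have h4 : (0 : ℝ) < 4 ^ n := by positivity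
    calc _ = (4 ^ n * (e (k n) ω - e (k (n + 1)) ω) ^ 2) * (1 / 4) ^ n := by
          rw [one_div, inv_pow]; field_simp
      _ ≤ M * (1 / 4) ^ n := by gcongr
      _ = _ := by norm_num
  exact cauchySeq_tendsto_of_complete hc

end

noncomputable section

structure Raw (μ ν : Measure ℝ) {L : ℕ} (c : Fin L → ℝ × ℝ → ℝ) (φ ψ : ℝ → ℝ)
    (θ : Fin L → ℝ → ℝ) : Prop where
  mφ : Measurable φ
  iφ : Integrable φ μ
  mψ : Measurable ψ
  iψ : Integrable ψ ν
  mθ : ∀ l, Measurable (θ l)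
  bθ : ∀ l, ∃ M, ∀ x, |θ l x| ≤ M
  le : ∀ l x y, c l (x, y) ≤ φ x + ψ y + θ l x * (y - x)

structure NRaw (μ ν : Measure ℝ) {L : ℕ} (c : Fin L → ℝ × ℝ → ℝ) (x₀ : ℝ) (φ ψ : ℝ → ℝ)
    (θ : Fin L → ℝ → ℝ) (χ : ℝ → ℝ) : Prop where
  raw : Raw μ ν c φ ψ θ
  cv : ConvexOn ℝ univ χ
  nn : ∀ x, 0 ≤ χ x
  z : χ x₀ = 0
  int : Integrable χ ν
  lo : ∀ x, -φ x ≤ χ x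
  hi : ∀ x, χ x ≤ ψ x

section
variable {μ ν : Measure ℝ} {L : ℕ} {c : Fin L → ℝ × ℝ → ℝ} {x₀ : ℝ}

lemma normalise (h : Irr μ ν) (hc : ∀ l p, 0 ≤ c l p) (l0 : Fin L) (x₀ : ℝ) {φ ψ : ℝ → ℝ}
    {θ : Fin L → ℝ → ℝ} (hr : Raw μ ν c φ ψ θ) :
    ∃ φ' ψ' θ' χ, NRaw μ ν c x₀ φ' ψ' θ' χ ∧
      ∫ x, φ' x ∂μ + ∫ y, ψ' y ∂ν = ∫ x, φ x ∂μ + ∫ y, ψ y ∂ν := by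
  have := h.pμ
  have := h.pν
  set χ : ℝ → ℝ := fun y => ⨆ x, (-φ x - θ l0 x * (y - x)) with hχ
  have hle : ∀ x y, -φ x - θ l0 x * (y - x) ≤ ψ y := by
    intro x y
    have h1 := hr.le l0 x y
    have h2 := hc l0 (x, y)
    linarith
  have hbdd : ∀ y, BddAbove (range fun x => (-φ x - θ l0 x * (y - x))) := by
    intro y
    refine ⟨ψ y, ?_⟩
    rintro _ ⟨x, rfl⟩
    exact hle x y
  have hχψ : ∀ y, χ y ≤ ψ y := fun y => ciSup_le fun x => hle x y
  have hφχ : ∀ x, -φ x ≤ χ x := by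
    intro x
    have := le_ciSup (hbdd x) x
    simpa using this
  have hcv : ConvexOn ℝ univ χ := by
    refine ⟨convex_univ, fun y _ z _ s t hs ht hst => ciSup_le fun x => ?_⟩
    have h1 := le_ciSup (hbdd y) x
    have h2 := le_ciSup (hbdd z) x
    simp only [smul_eq_mul]
    have e : -φ x - θ l0 x * (s * y + t * z - x)
        = s * (-φ x - θ l0 x * (y - x)) + t * (-φ x - θ l0 x * (z - x)) := by
      linear_combination (-φ x + θ l0 x * x) * (-hst)
    rw [e]
    gcongr
  obtain ⟨p, hp⟩ := exists_isSub hcv x₀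
  set ℓ : ℝ → ℝ := fun z => χ x₀ + p * (z - x₀) with hℓ
  have hℓm : Measurable ℓ := by fun_prop
  have iμ : Integrable ℓ μ := integrable_affine h.iμ _ _ _
  have iν : Integrable ℓ ν := integrable_affine h.iν _ _ _
  have eqℓ : ∫ z, ℓ z ∂μ = ∫ z, ℓ z ∂ν := affine_eq h.iμ h.iν h.co _ _ _
  have hcv' : ConvexOn ℝ univ (fun z => χ z - ℓ z) := convexOn_sub_affine hcv _ _ _
  have hnn : ∀ z, 0 ≤ χ z - ℓ z := fun z => sub_nonneg.2 (hp z)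
  refine ⟨fun x => φ x + ℓ x, fun y => ψ y - ℓ y, fun l x => θ l x + p, fun z => χ z - ℓ z,
    ⟨⟨hr.mφ.add hℓm, hr.iφ.add iμ, hr.mψ.sub hℓm, hr.iψ.sub iν, fun l => (hr.mθ l).add_const p,
      fun l => ?_, fun l x y => ?_⟩, hcv', hnn, by simp [hℓ], ?_, fun x => ?_, fun x => ?_⟩, ?_⟩
  · obtain ⟨M, hM⟩ := hr.bθ l
    exact ⟨M + |p|, fun x => (abs_add_le _ _).trans (by gcongr; exact hM x)⟩
  · have := hr.le l x y
    simp only [hℓ]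
    linarith
  · refine (hr.iψ.sub iν).mono' (convexOn_measurable hcv').measurable.aestronglyMeasurable
      (.of_forall fun z => ?_)
    rw [Real.norm_eq_abs, abs_of_nonneg (hnn z)]
    simpa using hχψ z
  · have := hφχ x
    linarith
  · have := hχψ x
    linarith
  · rw [integral_add hr.iφ iμ, integral_sub hr.iψ iν, eqℓ]; ring

lemma NRaw.facts (h : Irr μ ν) {φ ψ χ : ℝ → ℝ} {θ : Fin L → ℝ → ℝ} {B : ℝ}
    (hr : NRaw μ ν c x₀ φ ψ θ χ) (hB : ∫ x, φ x ∂μ + ∫ y, ψ y ∂ν ≤ B) :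
    Moder μ ν x₀ B χ ∧ Integrable (fun x => φ x + χ x) μ ∧ ∫ x, (φ x + χ x) ∂μ ≤ B ∧
      Integrable (fun x => ψ x - χ x) ν ∧ ∫ x, (ψ x - χ x) ∂ν ≤ B := by
  obtain ⟨hi, hle⟩ := h.co χ hr.cv hr.int
  have h1 : 0 ≤ ∫ x, (φ x + χ x) ∂μ :=
    integral_nonneg fun x => by have := hr.lo x; simp only [Pi.zero_apply]; linarith
  have h2 : 0 ≤ ∫ x, (ψ x - χ x) ∂ν :=
    integral_nonneg fun x => by have := hr.hi x; simp only [Pi.zero_apply]; linarith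
  have e1 : ∫ x, (φ x + χ x) ∂μ = ∫ x, φ x ∂μ + ∫ x, χ x ∂μ := integral_add hr.raw.iφ hi
  have e2 : ∫ x, (ψ x - χ x) ∂ν = ∫ x, ψ x ∂ν - ∫ x, χ x ∂ν := integral_sub hr.raw.iψ hr.int
  exact ⟨⟨hr.cv, hr.nn, hr.z, hr.int, by linarith⟩, hr.raw.iφ.add hi, by linarith,
    hr.raw.iψ.sub hr.int, by linarith⟩

lemma NRaw.mid {φ ψ χ : ℝ → ℝ} {θ : Fin L → ℝ → ℝ} {φ' ψ' χ' : ℝ → ℝ} {θ' : Fin L → ℝ → ℝ}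
    (hr : NRaw μ ν c x₀ φ ψ θ χ) (hr' : NRaw μ ν c x₀ φ' ψ' θ' χ') :
    NRaw μ ν c x₀ ((1 / 2 : ℝ) • (φ + φ')) ((1 / 2 : ℝ) • (ψ + ψ')) ((1 / 2 : ℝ) • (θ + θ'))
      ((1 / 2 : ℝ) • (χ + χ')) := by
  refine ⟨⟨(hr.raw.mφ.add hr'.raw.mφ).const_smul _, (hr.raw.iφ.add hr'.raw.iφ).smul _,
    (hr.raw.mψ.add hr'.raw.mψ).const_smul _, (hr.raw.iψ.add hr'.raw.iψ).smul _,
    fun l => ((hr.raw.mθ l).add (hr'.raw.mθ l)).const_smul (1 / 2 : ℝ), fun l => ?_, fun l x y => ?_⟩,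
    (hr.cv.add hr'.cv).smul (by norm_num), fun x => ?_, ?_, (hr.int.add hr'.int).smul _,
    fun x => ?_, fun x => ?_⟩
  · obtain ⟨M, hM⟩ := hr.raw.bθ l
    obtain ⟨M', hM'⟩ := hr'.raw.bθ l
    refine ⟨M + M', fun x => ?_⟩
    have h1 := hM x
    have h2 := hM' x
    simp only [Pi.smul_apply, Pi.add_apply, smul_eq_mul]
    rw [abs_le] at *
    constructor <;> linarith [abs_nonneg (θ l x), h1.1, h1.2, h2.1, h2.2]
  · have h1 := hr.raw.le l x y
    have h2 := hr'.raw.le l x y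
    simp only [Pi.smul_apply, Pi.add_apply, smul_eq_mul]
    linarith
  · have h1 := hr.nn x
    have h2 := hr'.nn x
    simp only [Pi.smul_apply, Pi.add_apply, smul_eq_mul]
    linarith
  · simp [hr.z, hr'.z]
  · have h1 := hr.lo x
    have h2 := hr'.lo x
    simp only [Pi.smul_apply, Pi.add_apply, smul_eq_mul]
    linarith
  · have h1 := hr.hi x
    have h2 := hr'.hi x
    simp only [Pi.smul_apply, Pi.add_apply, smul_eq_mul]
    linarith

end
end

noncomputable section

lemma lim_of_exp {t : ℕ → ℝ} {l : ℝ}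
    (h : Filter.Tendsto (fun n => Real.exp (-(t n) / 2)) Filter.atTop (nhds l))
    (hn : ¬ Filter.Tendsto t Filter.atTop Filter.atTop) :
    ∃ m, Filter.Tendsto t Filter.atTop (nhds m) := by
  by_cases hl : l = 0
  · exfalso
    apply hn
    rw [hl, Real.tendsto_exp_comp_nhds_zero] at h
    have h2 := (Filter.tendsto_neg_atBot_atTop.comp h).const_mul_atTop (r := 2) (by norm_num)
    refine h2.congr fun n => ?_
    simp only [Function.comp]
    ring
  · refine ⟨-2 * Real.log l, ?_⟩
    have h2 := (h.log hl).const_mul (-2)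
    refine h2.congr fun n => ?_
    rw [Real.log_exp]; ring

lemma not_top_of_bdd {t : ℕ → ℝ} {K : ℝ} (h : ∀ n, t n ≤ K) :
    ¬ Filter.Tendsto t Filter.atTop Filter.atTop := by
  intro ht
  obtain ⟨n, hn⟩ := (ht.eventually (Filter.eventually_gt_atTop K)).exists
  exact absurd (h n) (not_le.2 hn)

section
variable {μ ν : Measure ℝ} {L : ℕ} {c : Fin L → ℝ × ℝ → ℝ} {x₀ : ℝ}

def dset (μ ν : Measure ℝ) {L : ℕ} (c : Fin L → ℝ × ℝ → ℝ) (x₀ P : ℝ) (n : ℕ) :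
    Set ((ℝ → ℝ) × (ℝ → ℝ) × (Fin L → ℝ → ℝ) × (ℝ → ℝ)) :=
  {a | NRaw μ ν c x₀ a.1 a.2.1 a.2.2.1 a.2.2.2 ∧
    ∫ x, a.1 x ∂μ + ∫ y, a.2.1 y ∂ν ≤ P + (1 / 2) ^ n}

def tfun {L : ℕ} (a : (ℝ → ℝ) × (ℝ → ℝ) × (Fin L → ℝ → ℝ) × (ℝ → ℝ)) (ω : Fin 3 × ℝ) : ℝ :=
  ![a.1 ω.2 + a.2.2.2 ω.2, a.2.2.2 ω.2, a.2.1 ω.2 - a.2.2.2 ω.2] ω.1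

lemma conv_seq (h : Irr μ ν) (hc : ∀ l p, 0 ≤ c l p) (l0 : Fin L)
    (hx : potential μ x₀ < potential ν x₀) {P : ℝ}
    (hgap : ∀ ε > 0, ∃ φ ψ θ, Raw μ ν c φ ψ θ ∧ ∫ x, φ x ∂μ + ∫ y, ψ y ∂ν ≤ P + ε) :
    ∃ (φ ψ : ℕ → ℝ → ℝ) (θ : ℕ → Fin L → ℝ → ℝ), (∀ n, Raw μ ν c (φ n) (ψ n) (θ n)) ∧
      (∀ n, ∫ x, φ n x ∂μ + ∫ y, ψ n y ∂ν ≤ P + (1 / 2) ^ n) ∧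
      (∀ᵐ x ∂μ, ∃ m, Filter.Tendsto (fun n => φ n x) Filter.atTop (nhds m)) ∧
      (∀ᵐ x ∂ν, ∃ m, Filter.Tendsto (fun n => ψ n x) Filter.atTop (nhds m)) := by
  have := h.pμ
  have := h.pν
  have hne : ∀ n, (dset μ ν c x₀ P n).Nonempty := by
    intro n
    obtain ⟨φ, ψ, θ, hr, hle⟩ := hgap ((1 / 2) ^ n) (by positivity)
    obtain ⟨φ', ψ', θ', χ, hn, he⟩ := normalise h hc l0 x₀ hr
    exact ⟨(φ', ψ', θ', χ), hn, by simpa [he] using hle⟩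
  have hanti : Antitone (dset μ ν c x₀ P) := by
    intro n m hnm a ha
    refine ⟨ha.1, ha.2.trans ?_⟩
    gcongr P + ?_
    exact pow_le_pow_of_le_one (by norm_num) (by norm_num) hnm
  have hcv : ∀ n, ∀ a ∈ dset μ ν c x₀ P n, ∀ b ∈ dset μ ν c x₀ P n, (1 / 2 : ℝ) • (a + b) ∈ dset μ ν c x₀ P n := by
    intro n a ha b hb
    refine ⟨ha.1.mid hb.1, ?_⟩
    have h1 := ha.2
    have h2 := hb.2
    have e1 : ∫ x, ((1 / 2 : ℝ) • (a + b)).1 x ∂μ = (∫ x, a.1 x ∂μ + ∫ x, b.1 x ∂μ) / 2 := by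
      have : ∀ x, ((1 / 2 : ℝ) • (a + b)).1 x = (1 / 2) * (a.1 x + b.1 x) := fun x => rfl
      simp_rw [this]
      rw [integral_const_mul, integral_add ha.1.raw.iφ hb.1.raw.iφ]; ring
    have e2 : ∫ x, ((1 / 2 : ℝ) • (a + b)).2.1 x ∂ν
        = (∫ x, a.2.1 x ∂ν + ∫ x, b.2.1 x ∂ν) / 2 := by
      have : ∀ x, ((1 / 2 : ℝ) • (a + b)).2.1 x = (1 / 2) * (a.2.1 x + b.2.1 x) := fun x => rfl
      simp_rw [this]
      rw [integral_const_mul, integral_add ha.1.raw.iψ hb.1.raw.iψ]; ring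
    rw [e1, e2]
    linarith
  have hT : ∀ (a b : (ℝ → ℝ) × (ℝ → ℝ) × (Fin L → ℝ → ℝ) × (ℝ → ℝ)) ω, tfun ((1 / 2 : ℝ) • (a + b)) ω = (tfun a ω + tfun b ω) / 2 := by
    rintro a b ⟨i, x⟩
    fin_cases i <;> simp [tfun] <;> ring
  have hm : ∀ a ∈ dset μ ν c x₀ P 0, Measurable (tfun a) := by
    intro a ha
    refine measurable_from_prod_countable_right fun i => ?_
    have m1 := ha.1.raw.mφ
    have m2 := ha.1.raw.mψ
    have m3 := (convexOn_measurable ha.1.cv).measurable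
    fin_cases i <;> simp [tfun] <;> fun_prop
  have hnn : ∀ a ∈ dset μ ν c x₀ P 0, ∀ ω, 0 ≤ tfun a ω := by
    rintro a ha ⟨i, x⟩
    have m1 := ha.1.lo x
    have m2 := ha.1.hi x
    have m3 := ha.1.nn x
    fin_cases i <;> simp [tfun] <;> linarith
  obtain ⟨a, ha, hlim⟩ := komlos ((Measure.count : Measure (Fin 3)).prod (μ + ν))
    (dset μ ν c x₀ P) hne hanti hcv tfun hT hm hnn
  have hlim2 : ∀ i, ∀ᵐ x ∂(μ + ν), ∃ l, Filter.Tendsto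
      (fun n => Real.exp (-(tfun (a n) (i, x)) / 2)) Filter.atTop (nhds l) := by
    have := Measure.ae_ae_of_ae_prod hlim
    rwa [Measure.ae_count_iff] at this
  have hB : ∀ n, ∫ x, (a n).1 x ∂μ + ∫ y, (a n).2.1 y ∂ν ≤ P + 1 := fun n =>
    (ha n).2.trans (by
      have : (1 / 2 : ℝ) ^ n ≤ 1 := pow_le_one₀ (by norm_num) (by norm_num)
      linarith)
  have hf := fun n => (ha n).1.facts h (hB n)
  have h0 := hlim2 0
  have h1 := hlim2 1
  have h2 := hlim2 2
  simp only [tfun, Matrix.cons_val_zero, Matrix.cons_val_one, Matrix.cons_val,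
    ae_add_measure_iff] at h0 h1 h2
  have g0 := ae_not_tendsto_top (P := μ) (f := fun n x => (a n).1 x + (a n).2.2.2 x)
    (fun n => (ha n).1.raw.mφ.add (convexOn_measurable (ha n).1.cv).measurable)
    (fun n x => by have := (ha n).1.lo x; linarith) (fun n => (hf n).2.1) (fun n => (hf n).2.2.1)
  have g2 := ae_not_tendsto_top (P := ν) (f := fun n x => (a n).2.1 x - (a n).2.2.2 x)
    (fun n => (ha n).1.raw.mψ.sub (convexOn_measurable (ha n).1.cv).measurable)
    (fun n x => by have := (ha n).1.hi x; linarith) (fun n => (hf n).2.2.2.1)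
    (fun n => (hf n).2.2.2.2)
  have g1 : ∀ y, (potential μ y < potential ν y ∨ ν {y} ≠ 0) →
      ¬ Filter.Tendsto (fun n => (a n).2.2.2 y) Filter.atTop Filter.atTop := by
    intro y hy
    obtain ⟨K, hK⟩ := bound_ae_pt (C := P + 1) h hx hy
    exact not_top_of_bdd fun n => hK _ (hf n).1
  refine ⟨fun n => (a n).1, fun n => (a n).2.1, fun n => (a n).2.2.1, fun n => (ha n).1.raw,
    fun n => (ha n).2, ?_, ?_⟩
  · filter_upwards [h0.1, h1.1, g0, h.ae] with x ⟨l0, hl0⟩ ⟨l1, hl1⟩ hg0 hI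
    obtain ⟨m0, hm0⟩ := lim_of_exp hl0 hg0
    obtain ⟨m1, hm1⟩ := lim_of_exp hl1 (g1 x (Or.inl hI))
    exact ⟨m0 - m1, (hm0.sub hm1).congr fun n => by ring⟩
  · filter_upwards [h2.2, h1.2, g2, ae_good h hx] with x ⟨l0, hl0⟩ ⟨l1, hl1⟩ hg0 hI
    obtain ⟨m0, hm0⟩ := lim_of_exp hl0 hg0
    obtain ⟨m1, hm1⟩ := lim_of_exp hl1 (g1 x hI)
    exact ⟨m0 + m1, (hm0.add hm1).congr fun n => by ring⟩

end
end

noncomputable section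

lemma submart_zero {γ : Measure (ℝ × ℝ)} (h : IsSubMart γ) {θ : ℝ → ℝ}
    (hi : Integrable (fun p : ℝ × ℝ => θ p.1 * (p.2 - p.1)) γ) :
    ∫ p, θ p.1 * (p.2 - p.1) ∂γ = 0 := by
  obtain ⟨hfin, rfl | ⟨κ, hκ, he, hb⟩⟩ := h
  · simp
  have : IsFiniteMeasure (γ.map Prod.fst) := inferInstance
  rw [← he] at hi ⊢
  rw [Measure.integral_compProd hi]
  have : ∀ᵐ x ∂(γ.map Prod.fst), ∫ y, θ x * (y - x) ∂(κ x) = 0 := by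
    filter_upwards [hb] with x hx
    rw [integral_const_mul, integral_sub (f := fun y => y) hx.1 (integrable_const _), hx.2]
    simp
  rw [integral_congr_ae this]
  simp

section
variable {μ ν : Measure ℝ} {L : ℕ}

lemma feas_marg [IsProbabilityMeasure μ] {γ : Fin L → Measure (ℝ × ℝ)} (hf : MLfeasible μ ν γ) :
    (∑ l, γ l).map Prod.fst = μ ∧ (∑ l, γ l).map Prod.snd = ν := by
  obtain ⟨_, κ, ⟨hκ, hs, _⟩, he⟩ := hf
  rw [he]
  exact ⟨Measure.fst_compProd μ κ, hs⟩

lemma feas_ae {γ : Fin L → Measure (ℝ × ℝ)} {p : ℝ × ℝ → Prop} (h : ∀ᵐ x ∂(∑ l, γ l), p x)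
    (l : Fin L) : ∀ᵐ x ∂(γ l), p x := by
  rw [ae_iff] at *
  rw [Measure.finsetSum_apply, Finset.sum_eq_zero_iff] at h
  exact h l (Finset.mem_univ l)

lemma slack [IsProbabilityMeasure μ] (hμ : Integrable id μ) (hν : Integrable id ν)
    {γ : Fin L → Measure (ℝ × ℝ)}
    (hf : MLfeasible μ ν γ) {φ ψ : ℝ → ℝ} {θ : Fin L → ℝ → ℝ} (iφ : Integrable φ μ)
    (iψ : Integrable ψ ν) (mθ : ∀ l, Measurable (θ l)) (bθ : ∀ l, ∃ M, ∀ x, |θ l x| ≤ M) :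
    (∀ l, Integrable (fun p : ℝ × ℝ => φ p.1 + ψ p.2 + θ l p.1 * (p.2 - p.1)) (γ l)) ∧
      ∑ l, ∫ p, (φ p.1 + ψ p.2 + θ l p.1 * (p.2 - p.1)) ∂(γ l)
        = ∫ x, φ x ∂μ + ∫ y, ψ y ∂ν := by
  obtain ⟨h1, h2⟩ := feas_marg hf
  have f1 : ∀ {f : ℝ → ℝ}, Integrable f μ → Integrable (fun p : ℝ × ℝ => f p.1) (∑ l, γ l) := by
    intro f hf
    rw [← h1] at hf
    exact hf.comp_measurable measurable_fst
  have f2 : ∀ {f : ℝ → ℝ}, Integrable f ν → Integrable (fun p : ℝ × ℝ => f p.2) (∑ l, γ l) := by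
    intro f hf
    rw [← h2] at hf
    exact hf.comp_measurable measurable_snd
  have i3 : ∀ l, Integrable (fun p : ℝ × ℝ => θ l p.1 * (p.2 - p.1)) (γ l) := by
    intro l
    obtain ⟨M, hM⟩ := bθ l
    have : Integrable (fun p : ℝ × ℝ => p.2 - p.1) (γ l) :=
      integrable_finsetSum_measure.1 ((f2 hν).sub (f1 hμ)) l (Finset.mem_univ l)
    exact this.bdd_mul ((mθ l).comp measurable_fst).aestronglyMeasurable
      (.of_forall fun p => hM p.1)
  have i1 : ∀ l, Integrable (fun p : ℝ × ℝ => φ p.1 + ψ p.2) (γ l) := fun l =>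
    integrable_finsetSum_measure.1 ((f1 iφ).add (f2 iψ)) l (Finset.mem_univ l)
  refine ⟨fun l => (i1 l).add (i3 l), ?_⟩
  have e : ∀ l, ∫ p, (φ p.1 + ψ p.2 + θ l p.1 * (p.2 - p.1)) ∂(γ l)
      = ∫ p, (φ p.1 + ψ p.2) ∂(γ l) := by
    intro l
    rw [integral_add (i1 l) (i3 l), submart_zero (hf.1 l) (i3 l), add_zero]
  simp_rw [e]
  rw [← integral_finsetSum_measure (fun l _ => i1 l), integral_add (f1 iφ) (f2 iψ)]
  congr 1
  · conv_rhs => rw [← h1]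
    rw [integral_map measurable_fst.aemeasurable (by rw [h1]; exact iφ.aestronglyMeasurable)]
  · conv_rhs => rw [← h2]
    rw [integral_map measurable_snd.aemeasurable (by rw [h2]; exact iψ.aestronglyMeasurable)]

end
end

noncomputable section

section
variable {μ ν : Measure ℝ} {L : ℕ} {c : Fin L → ℝ × ℝ → ℝ} {x₀ : ℝ}

open Filter in
lemma theta_lim {G H : Set ℝ} {f g : ℝ → ℝ} {φ ψ θ : ℕ → ℝ → ℝ} {c : ℝ → ℝ → ℝ}
    (h0 : ∀ x y, 0 ≤ c x y)
    (hle : ∀ n x y, c x y ≤ φ n x + ψ n y + θ n x * (y - x))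
    (hφ : ∀ x ∈ G, Tendsto (fun n => φ n x) atTop (nhds (f x)))
    (hψ : ∀ x ∈ H, Tendsto (fun n => ψ n x) atTop (nhds (g x)))
    (hr : ∀ x ∈ G, ∃ y ∈ H, x < y) (hl : ∀ x ∈ G, ∃ y ∈ H, y < x) :
    ∀ x ∈ G, ∀ y ∈ H, c x y ≤ f x + g y + limsup (fun n => θ n x) atTop * (y - x) := by
  intro x hx
  have up : ∀ y ∈ H, x < y → ∀ n, (c x y - φ n x - ψ n y) / (y - x) ≤ θ n x := by
    intro y hy hxy n
    rw [div_le_iff₀ (by linarith)]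
    linarith [hle n x y]
  have dn : ∀ y ∈ H, y < x → ∀ n, θ n x ≤ (φ n x + ψ n y - c x y) / (x - y) := by
    intro y hy hxy n
    rw [le_div_iff₀ (by linarith)]
    linarith [hle n x y]
  have upt : ∀ y ∈ H, Tendsto (fun n => (c x y - φ n x - ψ n y) / (y - x)) atTop
      (nhds ((c x y - f x - g y) / (y - x))) := fun y hy =>
    (((hφ x hx).const_sub (c x y)).sub (hψ y hy)).div_const _
  have dnt : ∀ y ∈ H, Tendsto (fun n => (φ n x + ψ n y - c x y) / (x - y)) atTop
      (nhds ((f x + g y - c x y) / (x - y))) := fun y hy =>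
    (((hφ x hx).add (hψ y hy)).sub_const (c x y)).div_const _
  have bbelow : IsBoundedUnder (· ≥ ·) atTop (fun n => θ n x) := by
    obtain ⟨y, hy, hxy⟩ := hr x hx
    exact (upt y hy).isBoundedUnder_ge.mono_ge (.of_forall (up y hy hxy))
  have babove : IsBoundedUnder (· ≤ ·) atTop (fun n => θ n x) := by
    obtain ⟨y, hy, hxy⟩ := hl x hx
    exact (dnt y hy).isBoundedUnder_le.mono_le (.of_forall (dn y hy hxy))
  intro y hy
  rcases lt_trichotomy x y with hxy | rfl | hxy
  · have h1 := limsup_le_limsup (.of_forall (up y hy hxy)) (upt y hy).isCoboundedUnder_le babove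
    rw [(upt y hy).limsup_eq, div_le_iff₀ (by linarith)] at h1
    linarith
  · have h1 : c x x ≤ f x + g x := by
      refine ge_of_tendsto ((hφ x hx).add (hψ x hy)) (.of_forall fun n => ?_)
      simpa using hle n x x
    simpa using h1
  · have h1 := limsup_le_limsup (.of_forall (dn y hy hxy)) bbelow.isCoboundedUnder_le
      (dnt y hy).isBoundedUnder_le
    rw [(dnt y hy).limsup_eq, le_div_iff₀ (by linarith)] at h1
    linarith

open Filter in
theorem key (h : Irr μ ν) (hc : ∀ l p, 0 ≤ c l p) (l0 : Fin L)
    (hx : potential μ x₀ < potential ν x₀) {P : ℝ}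
    (hgap : ∀ ε > 0, ∃ φ ψ θ, Raw μ ν c φ ψ θ ∧ ∫ x, φ x ∂μ + ∫ y, ψ y ∂ν ≤ P + ε) :
    ∃ (G H : Set ℝ) (φ ψ : ℝ → ℝ) (θ : Fin L → ℝ → ℝ), MeasurableSet G ∧ MeasurableSet H ∧
      Measurable φ ∧ Measurable ψ ∧ (∀ l, Measurable (θ l)) ∧ (∀ᵐ x ∂μ, x ∈ G) ∧
      (∀ᵐ y ∂ν, y ∈ H) ∧
      (∀ l, ∀ x ∈ G, ∀ y ∈ H, c l (x, y) ≤ φ x + ψ y + θ l x * (y - x)) ∧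
      ∀ γ, MLfeasible μ ν γ → (∀ l, Integrable (c l) (γ l)) → ∑ l, ∫ p, c l p ∂(γ l) = P →
        ∀ l, ∀ᵐ p ∂(γ l), p.1 ∈ G ∧ p.2 ∈ H ∧
          c l p = φ p.1 + ψ p.2 + θ l p.1 * (p.2 - p.1) := by
  have := h.pμ
  have := h.pν
  obtain ⟨φ, ψ, θ, hraw, hval, cφ, cψ⟩ := conv_seq h hc l0 hx hgap
  set G : Set ℝ := {x | potential μ x < potential ν x} ∩
    {x | ∃ m, Tendsto (fun n => φ n x) atTop (nhds m)} with hG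
  set H : Set ℝ := {x | ∃ m, Tendsto (fun n => ψ n x) atTop (nhds m)} with hH
  have mG : MeasurableSet G := h.op.measurableSet.inter
    (measurableSet_exists_tendsto fun n => (hraw n).mφ)
  have mH : MeasurableSet H := measurableSet_exists_tendsto fun n => (hraw n).mψ
  have aG : ∀ᵐ x ∂μ, x ∈ G := by
    filter_upwards [cφ, h.ae] with x h1 h2 using ⟨h2, h1⟩
  set f : ℝ → ℝ := fun x => limsup (fun n => φ n x) atTop with hf
  set g : ℝ → ℝ := fun x => limsup (fun n => ψ n x) atTop with hg
  have tf : ∀ x ∈ G, Tendsto (fun n => φ n x) atTop (nhds (f x)) := by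
    rintro x ⟨_, m, hm⟩
    simp only [hf]
    rwa [hm.limsup_eq]
  have tg : ∀ x ∈ H, Tendsto (fun n => ψ n x) atTop (nhds (g x)) := by
    rintro x ⟨m, hm⟩
    simp only [hg]
    rwa [hm.limsup_eq]
  have hr : ∀ x ∈ G, ∃ y ∈ H, x < y := by
    intro x hx
    by_contra! hcon
    refine mass_right h hx.1 (measure_mono_null (t := Hᶜ) ?_ cψ)
    intro y hy hyH
    exact absurd (hcon y hyH) (not_le.2 hy)
  have hl : ∀ x ∈ G, ∃ y ∈ H, y < x := by
    intro x hx
    by_contra! hcon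
    refine mass_left h hx.1 (measure_mono_null (t := Hᶜ) ?_ cψ)
    intro y hy hyH
    exact absurd (hcon y hyH) (not_le.2 hy)
  refine ⟨G, H, f, g, fun l x => limsup (fun n => θ n l x) atTop, mG, mH,
    .limsup fun n => (hraw n).mφ, .limsup fun n => (hraw n).mψ, fun l => .limsup fun n =>
    (hraw n).mθ l, aG, cψ, fun l => ?_, ?_⟩
  · exact theta_lim (c := fun x y => c l (x, y)) (θ := fun n => θ n l) (fun x y => hc l _)
      (fun n x y => (hraw n).le l x y) tf tg hr hl
  · intro γ hγ hi hv l
    have hsl := fun n => slack h.iμ h.iν hγ (hraw n).iφ (hraw n).iψ (hraw n).mθ (hraw n).bθ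
    have nn : ∀ n l (p : ℝ × ℝ),
        0 ≤ φ n p.1 + ψ n p.2 + θ n l p.1 * (p.2 - p.1) - c l p := by
      intro n l p
      have := (hraw n).le l p.1 p.2
      simp only [Prod.mk.eta] at this
      linarith
    have ht := ae_tendsto_zero (P := γ l)
      (f := fun n p => φ n p.1 + ψ n p.2 + θ n l p.1 * (p.2 - p.1) - c l p) (fun n p => nn n l p)
      (fun n => ((hsl n).1 l).sub (hi l)) (B := 1) (r := 1 / 2) (by norm_num) (by norm_num) (by
        intro n
        calc _ ≤ ∑ l, ∫ p, (φ n p.1 + ψ n p.2 + θ n l p.1 * (p.2 - p.1) - c l p) ∂(γ l) :=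
              Finset.single_le_sum (f := fun l =>
                ∫ p, (φ n p.1 + ψ n p.2 + θ n l p.1 * (p.2 - p.1) - c l p) ∂(γ l))
                (fun l _ => integral_nonneg (nn n l)) (Finset.mem_univ l)
          _ = ∑ l, (∫ p, (φ n p.1 + ψ n p.2 + θ n l p.1 * (p.2 - p.1)) ∂(γ l)
                - ∫ p, c l p ∂(γ l)) :=
              Finset.sum_congr rfl fun l _ => integral_sub ((hsl n).1 l) (hi l)
          _ = ∫ x, φ n x ∂μ + ∫ y, ψ n y ∂ν - P := by
              rw [Finset.sum_sub_distrib, (hsl n).2, hv]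
          _ ≤ 1 * (1 / 2) ^ n := by linarith [hval n])
    obtain ⟨m1, m2⟩ := feas_marg hγ
    have a1 : ∀ᵐ p ∂(γ l), p.1 ∈ G := by
      refine feas_ae ?_ l
      rw [← m1] at aG
      exact ae_of_ae_map measurable_fst.aemeasurable aG
    have a2 : ∀ᵐ p ∂(γ l), p.2 ∈ H := by
      refine feas_ae ?_ l
      have : ∀ᵐ y ∂ν, y ∈ H := cψ
      rw [← m2] at this
      exact ae_of_ae_map measurable_snd.aemeasurable this
    filter_upwards [a1, a2, ht] with p h1 h2 h3
    refine ⟨h1, h2, ?_⟩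
    have t1 := tf _ h1
    have t2 := tg _ h2
    obtain ⟨x, y⟩ := p
    simp only at *
    by_cases hxy : y = x
    · subst hxy
      have h4 : Tendsto (fun n => φ n y + ψ n y + θ n l y * (y - y) - c l (y, y)) atTop
          (nhds (f y + g y - c l (y, y))) := by
        simpa using (t1.add t2).sub_const (c l (y, y))
      have := tendsto_nhds_unique h3 h4
      simp only [sub_self, mul_zero, add_zero]
      linarith
    · have hne : y - x ≠ 0 := sub_ne_zero.2 hxy
      have h4 : Tendsto (fun n => θ n l x) atTop
          (nhds ((0 + c l (x, y) - f x - g y) / (y - x))) := by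
        refine ((((h3.add_const (c l (x, y))).sub t1).sub t2).div_const (y - x)).congr fun n => ?_
        field_simp
        ring
      rw [h4.limsup_eq]
      field_simp
      ring

end
end

noncomputable section

open scoped ContDiff in
lemma bary {γ : Measure (ℝ × ℝ)} [IsFiniteMeasure γ]
    (hi : Integrable (fun p : ℝ × ℝ => p.2 - p.1) γ) (hi2 : Integrable (fun p : ℝ × ℝ => p.2) γ)
    (h0 : ∀ θ : ℝ → ℝ, Continuous θ → (∃ M, ∀ x, |θ x| ≤ M) →
      ∫ p, θ p.1 * (p.2 - p.1) ∂γ = 0) :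
    ∃ κ : Kernel ℝ ℝ, IsMarkovKernel κ ∧ γ.map Prod.fst ⊗ₘ κ = γ ∧
      ∀ᵐ x ∂(γ.map Prod.fst), Integrable id (κ x) ∧ ∫ y, y ∂(κ x) = x := by
  refine ⟨γ.condKernel, inferInstance, γ.disintegrate γ.condKernel, ?_⟩
  have h1 := hi2.condKernel_ae
  have h2 : ∀ᵐ x ∂γ.fst, ∫ y, (y - x) ∂(γ.condKernel x) = 0 := by
    refine ae_eq_zero_of_integral_contDiff_smul_eq_zero
      (Integrable.locallyIntegrable hi.integral_condKernel) fun g hg hgs => ?_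
    obtain ⟨M, hM⟩ := hgs.exists_bound_of_continuous hg.continuous
    have h3 := h0 g hg.continuous ⟨M, hM⟩
    have hIntg : Integrable (fun p : ℝ × ℝ => g p.1 * (p.2 - p.1)) γ :=
      hi.bdd_mul (hg.continuous.comp continuous_fst).aestronglyMeasurable
      (.of_forall fun p => hM p.1)
    rw [← Measure.integral_condKernel hIntg] at h3
    rw [← h3]
    refine integral_congr_ae (.of_forall fun x => ?_)
    simp only [smul_eq_mul]
    rw [integral_const_mul]
  filter_upwards [h1, h2] with x h3 h4
  refine ⟨h3, ?_⟩
  rw [integral_sub h3 (integrable_const _)] at h4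
  simp at h4
  linarith

def Fone (μ ν : Measure ℝ) : Submodule ℝ (ℝ × ℝ → ℝ) where
  carrier := {f | ∃ a b : ℝ → ℝ, Measurable a ∧ Integrable a μ ∧ Measurable b ∧ Integrable b ν ∧
    (∀ x, 0 ≤ a x) ∧ (∀ x, 0 ≤ b x) ∧ ∀ p, |f p| ≤ a p.1 + b p.2}
  zero_mem' := ⟨0, 0, measurable_zero, integrable_zero _ _ _, measurable_zero, integrable_zero _ _ _,
    fun _ => le_rfl, fun _ => le_rfl, fun p => by simp⟩
  add_mem' := by
    rintro f g ⟨a, b, h1, h2, h3, h4, h5, h6, h7⟩ ⟨a', b', k1, k2, k3, k4, k5, k6, k7⟩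
    refine ⟨a + a', b + b', h1.add k1, h2.add k2, h3.add k3, h4.add k4,
      fun x => add_nonneg (h5 x) (k5 x), fun x => add_nonneg (h6 x) (k6 x), fun p => ?_⟩
    have := abs_add_le (f p) (g p)
    simp only [Pi.add_apply]
    linarith [h7 p, k7 p]
  smul_mem' := by
    rintro t f ⟨a, b, h1, h2, h3, h4, h5, h6, h7⟩
    refine ⟨|t| • a, |t| • b, h1.const_smul _, h2.smul _, h3.const_smul _, h4.smul _,
      fun x => mul_nonneg (abs_nonneg t) (h5 x), fun x => mul_nonneg (abs_nonneg t) (h6 x),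
      fun p => ?_⟩
    simp only [Pi.smul_apply, smul_eq_mul, abs_mul]
    rw [← mul_add]
    gcongr
    exact h7 p

lemma Fone_of_bdd {μ ν : Measure ℝ} [IsProbabilityMeasure μ] {f : ℝ × ℝ → ℝ} {M : ℝ}
    (h : ∀ p, |f p| ≤ M) : f ∈ Fone μ ν :=
  ⟨fun _ => M, 0, measurable_const, integrable_const _, measurable_zero, integrable_zero _ _ _,
    fun _ => (abs_nonneg _).trans (h (0, 0)), fun _ => le_rfl, fun p => by simpa using h p⟩

lemma Fone_of_le {μ ν : Measure ℝ} {f g : ℝ × ℝ → ℝ} (hg : g ∈ Fone μ ν)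
    (h : ∀ p, |f p| ≤ |g p|) : f ∈ Fone μ ν := by
  obtain ⟨a, b, h1, h2, h3, h4, h5, h6, h7⟩ := hg
  exact ⟨a, b, h1, h2, h3, h4, h5, h6, fun p => (h p).trans (h7 p)⟩

lemma tail_zero {μ : Measure ℝ} {g q : ℝ → ℝ} (hg : Integrable g μ) (hq : Measurable q) :
    Filter.Tendsto (fun n : ℕ => ∫ x in {x | (n : ℝ) < q x}, g x ∂μ) Filter.atTop (nhds 0) := by
  have := tendsto_setIntegral_of_antitone (μ := μ) (f := g) (s := fun n : ℕ => {x | (n : ℝ) < q x})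
    (fun n => measurableSet_lt measurable_const hq)
    (fun n m hnm x (hx : (m : ℝ) < q x) => lt_of_le_of_lt (by exact_mod_cast hnm) hx)
    ⟨0, hg.integrableOn⟩
  have he : (⋂ n : ℕ, {x | (n : ℝ) < q x}) = ∅ := by
    ext x
    simp only [mem_iInter, mem_empty_iff_false, iff_false, not_forall]
    obtain ⟨n, hn⟩ := exists_nat_ge (q x)
    exact ⟨n, not_lt.2 hn⟩
  rw [he] at this
  simpa using this

def cut (n : ℕ) (t : ℝ) : ℝ := max 0 (min 1 ((n : ℝ) + 1 - |t|))

lemma cut_cont (n : ℕ) : Continuous (cut n) := by unfold cut; fun_prop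
lemma cut_nonneg (n : ℕ) (t : ℝ) : 0 ≤ cut n t := le_max_left _ _
lemma cut_le (n : ℕ) (t : ℝ) : cut n t ≤ 1 := max_le zero_le_one (min_le_left _ _)
lemma cut_one {n : ℕ} {t : ℝ} (h : |t| ≤ n) : cut n t = 1 := by
  unfold cut
  rw [min_eq_left (by linarith), max_eq_right zero_le_one]
lemma cut_zero {n : ℕ} {t : ℝ} (h : (n : ℝ) + 1 < |t|) : cut n t = 0 := by
  unfold cut
  rw [max_eq_left]
  exact (min_le_right _ _).trans (by linarith)
lemma cut_mono {n m : ℕ} (h : n ≤ m) (t : ℝ) : cut n t ≤ cut m t := by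
  unfold cut
  have : (n : ℝ) ≤ m := by exact_mod_cast h
  gcongr

def cut2 (n : ℕ) (p : ℝ × ℝ) : ℝ := cut n p.1 * cut n p.2

lemma cut2_cont (n : ℕ) : Continuous (cut2 n) :=
  ((cut_cont n).comp continuous_fst).mul ((cut_cont n).comp continuous_snd)
lemma cut2_nonneg (n : ℕ) (p) : 0 ≤ cut2 n p := mul_nonneg (cut_nonneg _ _) (cut_nonneg _ _)
lemma cut2_le (n : ℕ) (p) : cut2 n p ≤ 1 := mul_le_one₀ (cut_le _ _) (cut_nonneg _ _) (cut_le _ _)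
lemma cut2_one {n : ℕ} {p : ℝ × ℝ} (h1 : |p.1| ≤ n) (h2 : |p.2| ≤ n) : cut2 n p = 1 := by
  simp [cut2, cut_one h1, cut_one h2]
lemma cut2_supp (n : ℕ) : HasCompactSupport (cut2 n) := by
  refine HasCompactSupport.intro (K := Icc (-((n : ℝ) + 1)) (n + 1) ×ˢ Icc (-((n : ℝ) + 1)) (n + 1))
    (isCompact_Icc.prod isCompact_Icc) fun p hp => ?_
  rw [mem_prod, mem_Icc, mem_Icc, ← abs_le, ← abs_le, not_and_or, not_le, not_le] at hp
  unfold cut2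
  rcases hp with hp | hp
  · rw [cut_zero hp, zero_mul]
  · rw [cut_zero hp, mul_zero]
lemma cut2_tendsto (p : ℝ × ℝ) :
    Filter.Tendsto (fun n => cut2 n p) Filter.atTop (nhds 1) := by
  obtain ⟨n, hn⟩ := exists_nat_ge (max |p.1| |p.2|)
  refine tendsto_const_nhds.congr' ?_
  filter_upwards [Filter.eventually_ge_atTop n] with m hm
  have : (n : ℝ) ≤ m := by exact_mod_cast hm
  rw [cut2_one] <;> linarith [le_max_left |p.1| |p.2|, le_max_right |p.1| |p.2|]

end

noncomputable section

section
variable {μ ν : Measure ℝ} [IsProbabilityMeasure μ] [IsProbabilityMeasure ν]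

lemma tail_bound {a b f : ℝ × ℝ → ℝ} {α β : ℝ → ℝ} {n m : ℕ} (p : ℝ × ℝ)
    (hα : 0 ≤ α p.1) (hβ : 0 ≤ β p.2) (h0 : 0 ≤ f p) (hf : f p ≤ α p.1 + β p.2) :
    f p - f p * cut2 n p ≤
      ({x | (n : ℝ) < |x|}.indicator (fun x => α x + m) p.1
        + {x | (m : ℝ) < α x}.indicator α p.1)
      + ({x | (n : ℝ) < |x|}.indicator (fun x => β x + m) p.2
        + {x | (m : ℝ) < β x}.indicator β p.2) := by
  have hm : (0 : ℝ) ≤ m := Nat.cast_nonneg m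
  have h1 : 0 ≤ f p * cut2 n p := mul_nonneg h0 (cut2_nonneg n p)
  simp only [indicator_apply, mem_setOf_eq]
  by_cases hx : (n : ℝ) < |p.1|
  · rw [if_pos hx]
    split_ifs <;> linarith
  · by_cases hy : (n : ℝ) < |p.2|
    · rw [if_neg hx, if_pos hy]
      split_ifs <;> linarith
    · rw [cut2_one (not_lt.1 hx) (not_lt.1 hy), if_neg hx, if_neg hy]
      split_ifs <;> linarith

open Filter in
lemma riesz_nonneg (Λ : Fone μ ν →ₗ[ℝ] ℝ) (pos : ∀ f : Fone μ ν, (∀ p, 0 ≤ f.1 p) → 0 ≤ Λ f)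
    (dom : ∀ (f : Fone μ ν) (a b : ℝ → ℝ), Measurable a → Integrable a μ → Measurable b →
      Integrable b ν → (∀ x, 0 ≤ a x) → (∀ x, 0 ≤ b x) → (∀ p, f.1 p ≤ a p.1 + b p.2) →
      Λ f ≤ ∫ x, a x ∂μ + ∫ x, b x ∂ν) (γ : Measure (ℝ × ℝ))
    (hγ : ∀ f : Fone μ ν, Continuous f.1 → HasCompactSupport f.1 → ∫ p, f.1 p ∂γ = Λ f)
    (hγi : ∀ f : Fone μ ν, Continuous f.1 → HasCompactSupport f.1 → Integrable f.1 γ)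
    (f : Fone μ ν) (hf : Continuous f.1) (h0 : ∀ p, 0 ≤ f.1 p) :
    Integrable f.1 γ ∧ ∫ p, f.1 p ∂γ = Λ f := by
  obtain ⟨a, b, h1, h2, h3, h4, h5, h6, h7⟩ := f.2
  have hfn : ∀ n p, 0 ≤ f.1 p * cut2 n p := fun n p => mul_nonneg (h0 p) (cut2_nonneg n p)
  have hfle : ∀ n p, f.1 p * cut2 n p ≤ f.1 p := fun n p =>
    mul_le_of_le_one_right (h0 p) (cut2_le n p)
  have hmem : ∀ n, (fun p => f.1 p * cut2 n p) ∈ Fone μ ν := fun n =>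
    Fone_of_le f.2 fun p => by
      rw [abs_of_nonneg (hfn n p), abs_of_nonneg (h0 p)]; exact hfle n p
  set F : ℕ → Fone μ ν := fun n => ⟨fun p => f.1 p * cut2 n p, hmem n⟩ with hF
  have Fc : ∀ n, Continuous (F n).1 := fun n => hf.mul (cut2_cont n)
  have Fs : ∀ n, HasCompactSupport (F n).1 := fun n => (cut2_supp n).mul_left
  have hle : ∀ n, Λ (F n) ≤ Λ f := by
    intro n
    have := pos (f - F n) fun p => by
      change 0 ≤ f.1 p - f.1 p * cut2 n p
      linarith [hfle n p]
    rw [map_sub] at this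
    linarith
  have htend : ∀ p, Tendsto (fun n => (F n).1 p) atTop (nhds (f.1 p)) := fun p => by
    simpa using (cut2_tendsto p).const_mul (f.1 p)
  have hIntg : Integrable f.1 γ := by
    refine ⟨hf.aestronglyMeasurable, ?_⟩
    have hl : ∫⁻ p, ENNReal.ofReal (f.1 p) ∂γ ≤ ENNReal.ofReal (Λ f) := by
      have e : ∀ p, ENNReal.ofReal (f.1 p)
          = liminf (fun n => ENNReal.ofReal ((F n).1 p)) atTop := fun p =>
        ((ENNReal.continuous_ofReal.tendsto _).comp (htend p)).liminf_eq.symm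
      simp_rw [e]
      refine (lintegral_liminf_le fun n => (Fc n).measurable.ennreal_ofReal).trans ?_
      refine liminf_le_of_le (by isBoundedDefault) fun r hr => ?_
      obtain ⟨n, hn⟩ := hr.exists
      refine hn.trans ?_
      rw [← ofReal_integral_eq_lintegral_ofReal (hγi _ (Fc n) (Fs n)) (.of_forall (hfn n)),
        hγ _ (Fc n) (Fs n)]
      exact ENNReal.ofReal_le_ofReal (hle n)
    rw [hasFiniteIntegral_iff_ofReal (.of_forall h0)]
    exact lt_of_le_of_lt hl ENNReal.ofReal_lt_top
  refine ⟨hIntg, ?_⟩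
  have hlim : Tendsto (fun n => Λ (F n)) atTop (nhds (∫ p, f.1 p ∂γ)) := by
    have := tendsto_integral_of_dominated_convergence (μ := γ) (F := fun n => (F n).1) (f := f.1)
      f.1 (fun n => (Fc n).aestronglyMeasurable) hIntg
      (fun n => .of_forall fun p => by
        rw [Real.norm_eq_abs, abs_of_nonneg (hfn n p)]; exact hfle n p) (.of_forall htend)
    refine this.congr fun n => hγ _ (Fc n) (Fs n)
  apply le_antisymm
  · exact le_of_tendsto hlim (.of_forall hle)
  -- upper bound
  have key : ∀ m : ℕ, Λ f - ∫ p, f.1 p ∂γ ≤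
      ∫ x in {x | (m : ℝ) < a x}, a x ∂μ + ∫ x in {x | (m : ℝ) < b x}, b x ∂ν := by
    intro m
    have iam : Integrable (fun x => a x + m) μ := h2.add (integrable_const _)
    have ibm : Integrable (fun x => b x + m) ν := h4.add (integrable_const _)
    have mn : ∀ n : ℕ, MeasurableSet {x : ℝ | (n : ℝ) < |x|} := fun n =>
      measurableSet_lt measurable_const measurable_id.abs
    have ma : MeasurableSet {x : ℝ | (m : ℝ) < a x} := measurableSet_lt measurable_const h1
    have mb : MeasurableSet {x : ℝ | (m : ℝ) < b x} := measurableSet_lt measurable_const h3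
    have hn : ∀ n, Λ f - Λ (F n) ≤
        (∫ x in {x | (n : ℝ) < |x|}, (a x + m) ∂μ + ∫ x in {x | (m : ℝ) < a x}, a x ∂μ)
        + (∫ x in {x | (n : ℝ) < |x|}, (b x + m) ∂ν + ∫ x in {x | (m : ℝ) < b x}, b x ∂ν) := by
      intro n
      have := dom (f - F n)
        (fun x => {x | (n : ℝ) < |x|}.indicator (fun x => a x + m) x
          + {x | (m : ℝ) < a x}.indicator a x)
        (fun x => {x | (n : ℝ) < |x|}.indicator (fun x => b x + m) x
          + {x | (m : ℝ) < b x}.indicator b x)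
        (((h1.add_const _).indicator (mn n)).add (h1.indicator ma))
        ((iam.indicator (mn n)).add (h2.indicator ma))
        (((h3.add_const _).indicator (mn n)).add (h3.indicator mb))
        ((ibm.indicator (mn n)).add (h4.indicator mb))
        (fun x => add_nonneg (indicator_nonneg (fun x _ => add_nonneg (h5 x) (Nat.cast_nonneg m)) _)
          (indicator_nonneg (fun x _ => h5 x) _))
        (fun x => add_nonneg (indicator_nonneg (fun x _ => add_nonneg (h6 x) (Nat.cast_nonneg m)) _)
          (indicator_nonneg (fun x _ => h6 x) _))
        (fun p => tail_bound (a := f.1) (b := f.1) p (h5 _) (h6 _) (h0 p)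
          ((le_abs_self _).trans (h7 p)))
      rw [map_sub, integral_add (iam.indicator (mn n)) (h2.indicator ma),
        integral_add (ibm.indicator (mn n)) (h4.indicator mb), integral_indicator (mn n),
        integral_indicator (mn n), integral_indicator ma, integral_indicator mb] at this
      exact this
    have t1 := tail_zero (q := fun x => |x|) iam measurable_id.abs
    have t2 := tail_zero (q := fun x => |x|) ibm measurable_id.abs
    have := le_of_tendsto_of_tendsto' (hlim.const_sub (Λ f))
      ((t1.add_const (∫ x in {x | (m : ℝ) < a x}, a x ∂μ)).add
      (t2.add_const (∫ x in {x | (m : ℝ) < b x}, b x ∂ν))) hn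
    simpa using this
  have := ge_of_tendsto' ((tail_zero h2 h1).add (tail_zero h4 h3)) key
  linarith

open CompactlySupported in
lemma riesz_rep (Λ : Fone μ ν →ₗ[ℝ] ℝ) (pos : ∀ f : Fone μ ν, (∀ p, 0 ≤ f.1 p) → 0 ≤ Λ f)
    (dom : ∀ (f : Fone μ ν) (a b : ℝ → ℝ), Measurable a → Integrable a μ → Measurable b →
      Integrable b ν → (∀ x, 0 ≤ a x) → (∀ x, 0 ≤ b x) → (∀ p, f.1 p ≤ a p.1 + b p.2) →
      Λ f ≤ ∫ x, a x ∂μ + ∫ x, b x ∂ν) :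
    ∃ γ : Measure (ℝ × ℝ), IsFiniteMeasure γ ∧ ∀ f : Fone μ ν, Continuous f.1 →
      Integrable f.1 γ ∧ ∫ p, f.1 p ∂γ = Λ f := by
  have memC : ∀ g : C_c(ℝ × ℝ, ℝ), (g : ℝ × ℝ → ℝ) ∈ Fone μ ν := by
    intro g
    obtain ⟨M, hM⟩ := g.hasCompactSupport.exists_bound_of_continuous g.continuous
    exact Fone_of_bdd hM
  let emb : C_c(ℝ × ℝ, ℝ) →ₗ[ℝ] Fone μ ν :=
    { toFun := fun g => ⟨g, memC g⟩
      map_add' := fun f g => rfl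
      map_smul' := fun t g => rfl }
  let Λ' : C_c(ℝ × ℝ, ℝ) →ₚ[ℝ] ℝ := PositiveLinearMap.mk₀ (Λ ∘ₗ emb)
    (fun g hg => pos _ fun p => hg p)
  have hγ : ∀ f : Fone μ ν, Continuous f.1 → HasCompactSupport f.1 →
      ∫ p, f.1 p ∂(RealRMK.rieszMeasure Λ') = Λ f := by
    intro f hf hs
    exact RealRMK.integral_rieszMeasure Λ' ⟨⟨f.1, hf⟩, hs⟩
  have hγi : ∀ f : Fone μ ν, Continuous f.1 → HasCompactSupport f.1 →
      Integrable f.1 (RealRMK.rieszMeasure Λ') := fun f hf hs =>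
    hf.integrable_of_hasCompactSupport hs
  have nn := riesz_nonneg Λ pos dom _ hγ hγi
  refine ⟨RealRMK.rieszMeasure Λ', ?_, fun f hf => ?_⟩
  · have := (nn ⟨fun _ => 1, Fone_of_bdd (M := 1) (by simp)⟩ continuous_const
      (fun _ => zero_le_one)).1
    rw [integrable_const_iff] at this
    simpa using this
  · have mp : (fun p => max (f.1 p) 0) ∈ Fone μ ν := Fone_of_le f.2 fun p => by
      rw [abs_of_nonneg (le_max_right _ _)]
      exact max_le (le_abs_self _) (abs_nonneg _)
    have mn : (fun p => max (-f.1 p) 0) ∈ Fone μ ν := Fone_of_le f.2 fun p => by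
      rw [abs_of_nonneg (le_max_right _ _)]
      exact max_le (neg_le_abs _) (abs_nonneg _)
    have h1 := nn ⟨_, mp⟩ (hf.max continuous_const) (fun p => le_max_right _ _)
    have h2 := nn ⟨_, mn⟩ (hf.neg.max continuous_const) (fun p => le_max_right _ _)
    have e : f = ⟨_, mp⟩ - ⟨_, mn⟩ := by
      ext p
      change f.1 p = max (f.1 p) 0 - max (-f.1 p) 0
      rcases le_total (f.1 p) 0 with h | h
      · rw [max_eq_right h, max_eq_left (by linarith)]; ring
      · rw [max_eq_left h, max_eq_right (by linarith)]; ring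
    have e' : f.1 = fun p => max (f.1 p) 0 - max (-f.1 p) 0 := congrArg Subtype.val e
    refine ⟨?_, ?_⟩
    · rw [e']; exact h1.1.sub h2.1
    · conv_rhs => rw [e]
      rw [map_sub, ← h1.2, ← h2.2, ← integral_sub h1.1 h2.1]
      exact integral_congr_ae (.of_forall fun p => congrFun e' p)

end
end

noncomputable section

section
variable {μ ν : Measure ℝ} {L : ℕ}

lemma Raw.add' {c c' : Fin L → ℝ × ℝ → ℝ} {φ ψ φ' ψ' : ℝ → ℝ} {θ θ' : Fin L → ℝ → ℝ}
    (h : Raw μ ν c φ ψ θ) (h' : Raw μ ν c' φ' ψ' θ') :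
    Raw μ ν (c + c') (φ + φ') (ψ + ψ') (θ + θ') where
  mφ := h.mφ.add h'.mφ
  iφ := h.iφ.add h'.iφ
  mψ := h.mψ.add h'.mψ
  iψ := h.iψ.add h'.iψ
  mθ l := (h.mθ l).add (h'.mθ l)
  bθ l := by
    obtain ⟨M, hM⟩ := h.bθ l
    obtain ⟨M', hM'⟩ := h'.bθ l
    exact ⟨M + M', fun x => (abs_add_le _ _).trans (add_le_add (hM x) (hM' x))⟩
  le l x y := by
    have h1 := h.le l x y
    have h2 := h'.le l x y
    simp only [Pi.add_apply]
    linarith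

lemma Raw.smul' {c : Fin L → ℝ × ℝ → ℝ} {φ ψ : ℝ → ℝ} {θ : Fin L → ℝ → ℝ} {t : ℝ} (ht : 0 ≤ t)
    (h : Raw μ ν c φ ψ θ) :
    Raw μ ν (t • c) (t • φ) (t • ψ) (t • θ) where
  mφ := h.mφ.const_smul t
  iφ := h.iφ.smul t
  mψ := h.mψ.const_smul t
  iψ := h.iψ.smul t
  mθ l := (h.mθ l).const_smul t
  bθ l := by
    obtain ⟨M, hM⟩ := h.bθ l
    refine ⟨t * M, fun x => ?_⟩
    simp only [Pi.smul_apply, smul_eq_mul, abs_mul, abs_of_nonneg ht]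
    exact mul_le_mul_of_nonneg_left (hM x) ht
  le l x y := by
    have h1 := mul_le_mul_of_nonneg_left (h.le l x y) ht
    simp only [Pi.smul_apply, smul_eq_mul]
    linarith

lemma Raw.weak [IsProbabilityMeasure μ] (hμ : Integrable id μ) (hν : Integrable id ν)
    {γ : Fin L → Measure (ℝ × ℝ)} (hf : MLfeasible μ ν γ) {c : Fin L → ℝ × ℝ → ℝ}
    (hc : ∀ l p, 0 ≤ c l p)
    {φ ψ : ℝ → ℝ} {θ : Fin L → ℝ → ℝ} (h : Raw μ ν c φ ψ θ) :
    0 ≤ ∫ x, φ x ∂μ + ∫ y, ψ y ∂ν := by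
  rw [← (slack hμ hν hf h.iφ h.iψ h.mθ h.bθ).2]
  exact Finset.sum_nonneg fun l _ => integral_nonneg fun p => (hc l p).trans (h.le l p.1 p.2)

def vset (μ ν : Measure ℝ) {L : ℕ} (f : Fin L → Fone μ ν) : Set ℝ :=
  {r | ∃ φ ψ θ, Raw μ ν (fun l => (f l).1) φ ψ θ ∧ r = ∫ x, φ x ∂μ + ∫ y, ψ y ∂ν}

lemma vset_ne (f : Fin L → Fone μ ν) : (vset μ ν f).Nonempty := by
  choose a b h1 h2 h3 h4 h5 h6 h7 using fun l => (f l).2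
  refine ⟨_, fun x => ∑ l, a l x, fun x => ∑ l, b l x, 0, ⟨?_, ?_, ?_, ?_, ?_, ?_, ?_⟩, rfl⟩
  · exact Finset.measurable_fun_sum _ fun l _ => h1 l
  · exact integrable_finsetSum _ fun l _ => h2 l
  · exact Finset.measurable_fun_sum _ fun l _ => h3 l
  · exact integrable_finsetSum _ fun l _ => h4 l
  · exact fun l => measurable_zero
  · exact fun l => ⟨0, fun x => by simp⟩
  · intro l x y
    have e1 := Finset.single_le_sum (f := fun l => a l x) (fun l _ => h5 l x) (Finset.mem_univ l)
    have e2 := Finset.single_le_sum (f := fun l => b l y) (fun l _ => h6 l y) (Finset.mem_univ l)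
    have e3 := (le_abs_self _).trans (h7 l (x, y))
    simp only [Pi.zero_apply, zero_mul, add_zero] at *
    linarith

lemma vset_add {f g : Fin L → Fone μ ν} {r s : ℝ} (hr : r ∈ vset μ ν f) (hs : s ∈ vset μ ν g) :
    r + s ∈ vset μ ν (f + g) := by
  obtain ⟨φ, ψ, θ, h, rfl⟩ := hr
  obtain ⟨φ', ψ', θ', h', rfl⟩ := hs
  refine ⟨_, _, _, h.add' h', ?_⟩
  simp only [Pi.add_apply]
  rw [integral_add h.iφ h'.iφ, integral_add h.iψ h'.iψ]
  ring

lemma vset_smul {f : Fin L → Fone μ ν} {r t : ℝ} (ht : 0 ≤ t) (hr : r ∈ vset μ ν f) :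
    t * r ∈ vset μ ν (t • f) := by
  obtain ⟨φ, ψ, θ, h, rfl⟩ := hr
  refine ⟨_, _, _, h.smul' ht, ?_⟩
  simp only [Pi.smul_apply, smul_eq_mul]
  rw [integral_const_mul, integral_const_mul]
  ring

lemma hb [IsProbabilityMeasure μ] (hμ : Integrable id μ) (hν : Integrable id ν)
    {γ : Fin L → Measure (ℝ × ℝ)} (hf : MLfeasible μ ν γ) (c : Fin L → Fone μ ν) (hc : c ≠ 0) :
    ∃ Λ : (Fin L → Fone μ ν) →ₗ[ℝ] ℝ,
      (∀ f φ ψ θ, Raw μ ν (fun l => (f l).1) φ ψ θ → Λ f ≤ ∫ x, φ x ∂μ + ∫ y, ψ y ∂ν) ∧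
      ∀ ε > 0, ∃ φ ψ θ, Raw μ ν (fun l => (c l).1) φ ψ θ ∧
        ∫ x, φ x ∂μ + ∫ y, ψ y ∂ν ≤ Λ c + ε := by
  have h0 : ∀ r ∈ vset μ ν (0 : Fin L → Fone μ ν), 0 ≤ r := by
    rintro r ⟨φ, ψ, θ, h, rfl⟩
    exact h.weak hμ hν hf (fun l p => le_rfl)
  have bd : ∀ f : Fin L → Fone μ ν, BddBelow (vset μ ν f) := by
    intro f
    obtain ⟨s, hs⟩ := vset_ne (-f)
    refine ⟨-s, fun r hr => ?_⟩
    have := h0 _ (by simpa using vset_add hr hs)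
    linarith
  set N : (Fin L → Fone μ ν) → ℝ := fun f => sInf (vset μ ν f) with hN
  have Nle : ∀ t : ℝ, 0 < t → ∀ f, N (t • f) ≤ t * N f := by
    intro t ht f
    rw [← div_le_iff₀' ht]
    refine le_csInf (vset_ne f) fun r hr => ?_
    rw [div_le_iff₀' ht]
    exact csInf_le (bd _) (vset_smul ht.le hr)
  have Nhom : ∀ t : ℝ, 0 < t → ∀ f, N (t • f) = t * N f := by
    intro t ht f
    refine le_antisymm (Nle t ht f) ?_
    have := Nle t⁻¹ (inv_pos.2 ht) (t • f)
    rw [smul_smul, inv_mul_cancel₀ ht.ne', one_smul] at this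
    rwa [← div_eq_inv_mul, le_div_iff₀' ht] at this
  have Nadd : ∀ f g, N (f + g) ≤ N f + N g := by
    intro f g
    have : N (f + g) - N g ≤ N f := by
      refine le_csInf (vset_ne f) fun r hr => ?_
      have : N (f + g) - r ≤ N g := by
        refine le_csInf (vset_ne g) fun s hs => ?_
        have : N (f + g) ≤ r + s := csInf_le (bd _) (vset_add hr hs)
        linarith
      linarith
    linarith
  have N0 : 0 ≤ N 0 := le_csInf (vset_ne _) h0
  have Nneg : ∀ f, 0 ≤ N f + N (-f) := fun f => by
    have := Nadd f (-f)
    rw [add_neg_cancel] at this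
    linarith
  obtain ⟨Λ, h1, h2⟩ := exists_extension_of_le_sublinear
    (LinearPMap.mkSpanSingleton (K := ℝ) c (N c) hc) N Nhom Nadd (by
      rintro ⟨x, hx⟩
      have hx' := hx
      rw [LinearPMap.domain_mkSpanSingleton, Submodule.mem_span_singleton] at hx'
      obtain ⟨t, rfl⟩ := hx'
      have e : LinearPMap.mkSpanSingleton (K := ℝ) c (N c) hc ⟨t • c, hx⟩ = t • N c :=
        LinearPMap.mkSpanSingleton'_apply _ _ _ _ _
      rw [e, smul_eq_mul]
      change t * N c ≤ N (t • c)
      rcases lt_trichotomy t 0 with ht | rfl | ht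
      · have e2 := Nhom (-t) (neg_pos.2 ht) c
        have := Nneg (t • c)
        rw [show -(t • c) = (-t) • c by ext; simp, e2] at this
        linarith
      · simpa using N0
      · rw [Nhom t ht])
  have hc' : Λ c = N c := by
    have hm : c ∈ (LinearPMap.mkSpanSingleton c (N c) hc : (Fin L → Fone μ ν) →ₗ.[ℝ] ℝ).domain := by
      rw [LinearPMap.domain_mkSpanSingleton]
      exact Submodule.mem_span_singleton_self c
    rw [h1 ⟨c, hm⟩]
    have hm1 : (1 : ℝ) • c ∈ (LinearPMap.mkSpanSingleton c (N c) hc : (Fin L → Fone μ ν) →ₗ.[ℝ] ℝ).domain := by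
      rw [one_smul]; exact hm
    have e : LinearPMap.mkSpanSingleton (K := ℝ) c (N c) hc ⟨(1 : ℝ) • c, hm1⟩ = (1 : ℝ) • N c :=
      LinearPMap.mkSpanSingleton'_apply _ _ _ _ _
    rw [show (⟨c, hm⟩ : (LinearPMap.mkSpanSingleton c (N c) hc : (Fin L → Fone μ ν) →ₗ.[ℝ] ℝ).domain)
      = ⟨(1 : ℝ) • c, hm1⟩ from Subtype.ext (one_smul ℝ c).symm, e, one_smul]
  refine ⟨Λ, fun f φ ψ θ h => (h2 f).trans (csInf_le (bd f) ⟨φ, ψ, θ, h, rfl⟩), fun ε hε => ?_⟩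
  obtain ⟨r, ⟨φ, ψ, θ, h, rfl⟩, hr⟩ := exists_lt_of_csInf_lt (vset_ne c)
    (show sInf (vset μ ν c) < Λ c + ε by rw [hc']; simp only [hN]; linarith)
  exact ⟨φ, ψ, θ, h, hr.le⟩

end
end

noncomputable section

section
variable {μ ν : Measure ℝ} {L : ℕ}

lemma single_apply_le {f : Fone μ ν} {l : Fin L} {l' : Fin L} {p : ℝ × ℝ} {t : ℝ} (h0 : 0 ≤ t)
    (h : f.1 p ≤ t) :
    ((Pi.single l f : Fin L → Fone μ ν) l').1 p ≤ t := by
  by_cases e : l' = l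
  · subst e; simpa using h
  · rw [Pi.single_eq_of_ne e]; exact h0

lemma Fone_fst {a : ℝ → ℝ} (ha : Measurable a) (hi : Integrable a μ) :
    (fun p : ℝ × ℝ => a p.1) ∈ Fone μ ν :=
  ⟨fun x => |a x|, 0, ha.abs, hi.abs, measurable_zero, integrable_zero _ _ _,
    fun x => abs_nonneg _, fun _ => le_rfl, fun p => by simp⟩

lemma Fone_snd {a : ℝ → ℝ} (ha : Measurable a) (hi : Integrable a ν) :
    (fun p : ℝ × ℝ => a p.2) ∈ Fone μ ν :=
  ⟨0, fun x => |a x|, measurable_zero, integrable_zero _ _ _, ha.abs, hi.abs,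
    fun _ => le_rfl, fun x => abs_nonneg _, fun p => by simp⟩

lemma Fone_th (hμ : Integrable id μ) (hν : Integrable id ν) {θ : ℝ → ℝ}
    (bθ : ∃ M, ∀ x, |θ x| ≤ M) :
    (fun p : ℝ × ℝ => θ p.1 * (p.2 - p.1)) ∈ Fone μ ν := by
  obtain ⟨M, hM⟩ := bθ
  have h1 : (fun p : ℝ × ℝ => |p.2| + |p.1|) ∈ Fone μ ν :=
    (Fone μ ν).add_mem (Fone_snd (a := fun x => |x|) measurable_id.abs hν.abs)
      (Fone_fst (a := fun x => |x|) measurable_id.abs hμ.abs)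
  refine Fone_of_le ((Fone μ ν).smul_mem M h1) fun p => ?_
  have hM0 : 0 ≤ M := (abs_nonneg _).trans (hM 0)
  simp only [Pi.smul_apply, smul_eq_mul, abs_mul]
  rw [abs_of_nonneg hM0, abs_of_nonneg (by positivity : 0 ≤ |p.2| + |p.1|)]
  exact mul_le_mul (hM _) (abs_sub _ _) (abs_nonneg _) hM0

lemma nogap [IsProbabilityMeasure μ] [IsProbabilityMeasure ν]
    (hμ : Integrable id μ) (hν : Integrable id ν)
    {γ₀ : Fin L → Measure (ℝ × ℝ)} (hf : MLfeasible μ ν γ₀) (c : Fin L → ℝ × ℝ → ℝ)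
    (hcc : ∀ l, Continuous (c l)) (hcF : ∀ l, c l ∈ Fone μ ν) (l0 : Fin L) (hc0 : c l0 (0, 0) ≠ 0) :
    ∃ γ, MLfeasible μ ν γ ∧ ∀ ε > 0, ∃ φ ψ θ, Raw μ ν c φ ψ θ ∧
      ∫ x, φ x ∂μ + ∫ y, ψ y ∂ν ≤ ∑ l, ∫ p, c l p ∂(γ l) + ε := by
  obtain ⟨Λ, h1, h2⟩ := hb hμ hν hf (fun l => ⟨c l, hcF l⟩) (by
    intro h
    have := congrArg (fun f => (f l0).1 (0, 0)) h
    exact hc0 this)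
  have heq : ∀ f φ ψ θ, Raw μ ν (fun l => (f l).1) φ ψ θ →
      (∀ l x y, (f l).1 (x, y) = φ x + ψ y + θ l x * (y - x)) →
      Λ f = ∫ x, φ x ∂μ + ∫ y, ψ y ∂ν := by
    intro f φ ψ θ hr he
    refine le_antisymm (h1 _ _ _ _ hr) ?_
    have hr' : Raw μ ν (fun l => ((-f) l).1) (-φ) (-ψ) (-θ) :=
      ⟨hr.mφ.neg, hr.iφ.neg, hr.mψ.neg, hr.iψ.neg, fun l => (hr.mθ l).neg,
        fun l => by simpa using hr.bθ l, fun l x y => by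
          have := he l x y
          simp only [Pi.neg_apply, NegMemClass.coe_neg, this]
          linarith⟩
    have := h1 _ _ _ _ hr'
    simp only [map_neg, Pi.neg_apply, integral_neg] at this
    linarith
  set Λl : Fin L → (Fone μ ν →ₗ[ℝ] ℝ) := fun l => Λ ∘ₗ LinearMap.single ℝ (fun _ => Fone μ ν) l
    with hΛl
  have hsum : ∀ f, Λ f = ∑ l, Λl l (f l) := by
    intro f
    conv_lhs => rw [← Finset.univ_sum_single f]
    rw [map_sum]
    rfl
  have hrep : ∀ l, ∃ γ : Measure (ℝ × ℝ), IsFiniteMeasure γ ∧ ∀ f : Fone μ ν, Continuous f.1 →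
      Integrable f.1 γ ∧ ∫ p, f.1 p ∂γ = Λl l f := by
    intro l
    have dom : ∀ (f : Fone μ ν) (a b : ℝ → ℝ), Measurable a → Integrable a μ → Measurable b →
        Integrable b ν → (∀ x, 0 ≤ a x) → (∀ x, 0 ≤ b x) → (∀ p, f.1 p ≤ a p.1 + b p.2) →
        Λl l f ≤ ∫ x, a x ∂μ + ∫ x, b x ∂ν := by
      intro f a b ma ia mb ib ha hb hab
      refine h1 (Pi.single l f) a b 0 ⟨ma, ia, mb, ib, fun _ => measurable_zero,
        fun _ => ⟨0, fun x => by simp⟩, fun l' x y => ?_⟩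
      refine single_apply_le ?_ ?_
      · simpa using add_nonneg (ha x) (hb y)
      · simpa using hab (x, y)
    refine riesz_rep (Λl l) (fun f hf0 => ?_) dom
    have := dom (-f) 0 0 measurable_zero (integrable_zero _ _ _) measurable_zero
      (integrable_zero _ _ _) (fun _ => le_rfl) (fun _ => le_rfl) (fun p => by simpa using hf0 p)
    simp only [map_neg, Pi.zero_apply, integral_zero] at this
    linarith
  choose γ fin hγ using hrep
  have key1 : ∀ (f : ℝ × ℝ → ℝ), f ∈ Fone μ ν → Continuous f →
      Integrable f (∑ l, γ l) ∧ ∫ p, f p ∂(∑ l, γ l) = ∑ l, ∫ p, f p ∂(γ l) ∧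
      (∀ l, Integrable f (γ l)) := by
    intro f hF hc
    have hi : ∀ l, Integrable f (γ l) := fun l => (hγ l ⟨f, hF⟩ hc).1
    exact ⟨integrable_finsetSum_measure.2 fun l _ => hi l,
      integral_finsetSum_measure fun l _ => hi l, hi⟩
  have key2 : ∀ (f : ℝ × ℝ → ℝ), (hF : f ∈ Fone μ ν) → Continuous f →
      ∫ p, f p ∂(∑ l, γ l) = Λ (fun _ => ⟨f, hF⟩) := by
    intro f hF hc
    rw [(key1 f hF hc).2.1, hsum]
    exact Finset.sum_congr rfl fun l _ => (hγ l ⟨f, hF⟩ hc).2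
  have finS : IsFiniteMeasure (∑ l, γ l) := inferInstance
  have bc : ∀ (f : BoundedContinuousFunction ℝ ℝ) (ξ : Measure ℝ) [IsProbabilityMeasure ξ],
      Integrable f ξ := fun f ξ _ => f.integrable ξ
  have m1 : (∑ l, γ l).map Prod.fst = μ := by
    refine ext_of_forall_integral_eq_of_IsFiniteMeasure fun f => ?_
    rw [integral_map measurable_fst.aemeasurable f.continuous.aestronglyMeasurable,
      key2 (fun p => f p.1) (Fone_fst f.continuous.measurable (bc f μ)) (by fun_prop),
      heq _ f 0 0 ⟨f.continuous.measurable, bc f μ, measurable_zero, integrable_zero _ _ _,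
        fun _ => measurable_zero, fun _ => ⟨0, fun x => by simp⟩, fun l x y => by simp⟩
        (fun l x y => by simp)]
    simp
  have m2 : (∑ l, γ l).map Prod.snd = ν := by
    refine ext_of_forall_integral_eq_of_IsFiniteMeasure fun f => ?_
    rw [integral_map measurable_snd.aemeasurable f.continuous.aestronglyMeasurable,
      key2 (fun p => f p.2) (Fone_snd f.continuous.measurable (bc f ν)) (by fun_prop),
      heq _ 0 f 0 ⟨measurable_zero, integrable_zero _ _ _, f.continuous.measurable, bc f ν,
        fun _ => measurable_zero, fun _ => ⟨0, fun x => by simp⟩, fun l x y => by simp⟩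
        (fun l x y => by simp)]
    simp
  have F2 : (fun p : ℝ × ℝ => p.2) ∈ Fone μ ν := Fone_snd measurable_id hν
  have F1 : (fun p : ℝ × ℝ => p.1) ∈ Fone μ ν := Fone_fst measurable_id hμ
  have F21 : (fun p : ℝ × ℝ => p.2 - p.1) ∈ Fone μ ν := (Fone μ ν).sub_mem F2 F1
  have z : ∀ l θ, Continuous θ → (∃ M, ∀ x, |θ x| ≤ M) →
      ∫ p, θ p.1 * (p.2 - p.1) ∂(γ l) = 0 := by
    intro l θ hθ bθ
    have hF : (fun p : ℝ × ℝ => θ p.1 * (p.2 - p.1)) ∈ Fone μ ν := Fone_th hμ hν bθ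
    have e := (hγ l ⟨_, hF⟩ (by simp only; fun_prop)).2
    simp only at e
    rw [e]
    have he : ∀ l' x y, ((Pi.single l (⟨_, hF⟩ : Fone μ ν) : Fin L → Fone μ ν) l').1 (x, y)
        = (0 : ℝ → ℝ) x + (0 : ℝ → ℝ) y
          + (Pi.single l θ : Fin L → ℝ → ℝ) l' x * (y - x) := by
      intro l' x y
      by_cases h : l' = l
      · subst h; simp
      · simp [Pi.single_eq_of_ne h]
    have := heq (Pi.single l ⟨_, hF⟩) 0 0 (Pi.single l θ) ⟨measurable_zero, integrable_zero _ _ _,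
      measurable_zero, integrable_zero _ _ _, fun l' => by
        by_cases h : l' = l
        · subst h; simpa using hθ.measurable
        · rw [Pi.single_eq_of_ne h]; exact measurable_zero, fun l' => by
        by_cases h : l' = l
        · subst h; simpa using bθ
        · rw [Pi.single_eq_of_ne h]; exact ⟨0, fun x => by simp⟩, fun l' x y => (he l' x y).le⟩ he
    simp only [Pi.zero_apply, integral_zero, add_zero] at this
    exact this
  have c21 : Continuous (fun p : ℝ × ℝ => p.2 - p.1) := by fun_prop
  have c2 : Continuous (fun p : ℝ × ℝ => p.2) := by fun_prop
  refine ⟨γ, ⟨fun l => ⟨fin l, Or.inr ?_⟩, ?_⟩, fun ε hε => ?_⟩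
  · exact bary ((key1 _ F21 c21).2.2 l) ((key1 _ F2 c2).2.2 l) (z l)
  · obtain ⟨κ, hκ, hk1, hk2⟩ := bary (key1 _ F21 c21).1 (key1 _ F2 c2).1 (fun θ hθ bθ => by
      rw [(key1 (fun p => θ p.1 * (p.2 - p.1)) (Fone_th hμ hν bθ) (by fun_prop)).2.1]
      exact Finset.sum_eq_zero fun l _ => z l θ hθ bθ)
    rw [m1] at hk1 hk2
    exact ⟨κ, ⟨hκ, by rw [hk1, m2], hk2⟩, hk1.symm⟩
  · obtain ⟨φ, ψ, θ, hr, hle⟩ := h2 ε hε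
    refine ⟨φ, ψ, θ, hr, hle.trans (le_of_eq ?_)⟩
    rw [hsum]
    congr 1
    exact Finset.sum_congr rfl fun l _ => ((hγ l ⟨c l, hcF l⟩ (hcc l)).2).symm

end
end

/-- Dual attainment: under [A'] and irreducibility of `(μ,ν)`, there is a measurable dual
optimizer `(φ, ψ, θ₁,…,θ_L)` with `φ, ψ : ℝ → ℝ ∪ {+∞}` finite a.e., satisfying the dual
inequality everywhere and, for every maximizer of the relaxed problem, the equality
`c_l = φ(x) + ψ(y) + θ_l(x)(y-x)` holds `γ_l`-a.e. for each `l`. -/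
theorem dual_attainment
    (μ ν : Measure ℝ) {L : ℕ} (c : Fin L → ℝ × ℝ → ℝ)
    (hA : AssumpA' μ ν c) (hirr : IrreduciblePair μ ν) :
    ∃ (φ ψ : ℝ → EReal) (θ : Fin L → ℝ → ℝ),
      Measurable φ ∧ Measurable ψ ∧ (∀ l, Measurable (θ l)) ∧
      (∀ x, φ x ≠ ⊥) ∧ (∀ y, ψ y ≠ ⊥) ∧
      (∀ᵐ x ∂μ, φ x ≠ ⊤) ∧ (∀ᵐ y ∂ν, ψ y ≠ ⊤) ∧
      (∀ l, ∀ x y : ℝ,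
        (c l (x, y) : EReal) ≤ φ x + ψ y + ((θ l x * (y - x) : ℝ) : EReal)) ∧
      (∀ γ : Fin L → Measure (ℝ × ℝ), MLfeasible μ ν γ →
        (∑ l, ∫ p, c l p ∂(γ l)) = RelaxedValue μ ν c →
        ∀ l, ∀ᵐ p ∂(γ l),
          (c l p : EReal) = φ p.1 + ψ p.2 + ((θ l p.1 * (p.2 - p.1) : ℝ) : EReal)) := by
  obtain ⟨pμ, pν, iμ, iν, hcc, hco, v, w, cv, cw, iv, iw, hb⟩ := hA
  obtain ⟨ho, hcn, hfull⟩ := hirr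
  have hcb : ∀ l x y, |c l (x, y)| ≤ v x + w y := fun l x y =>
    (Finset.single_le_sum (f := fun l => |c l (x, y)|) (fun l _ => abs_nonneg _)
      (Finset.mem_univ l)).trans (hb x y)
  by_cases hex : ∃ γ₀ : Fin L → Measure (ℝ × ℝ), MLfeasible μ ν γ₀
  swap
  · refine ⟨fun x => (v x : EReal), fun y => (w y : EReal), 0, cv.measurable.coe_real_ereal,
      cw.measurable.coe_real_ereal, fun l => measurable_zero, fun x => EReal.coe_ne_bot _,
      fun x => EReal.coe_ne_bot _, Filter.Eventually.of_forall fun x => EReal.coe_ne_top _,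
      Filter.Eventually.of_forall fun x => EReal.coe_ne_top _, fun l x y => ?_,
      fun γ hγ => absurd ⟨γ, hγ⟩ hex⟩
    have := (le_abs_self _).trans (hcb l x y)
    simp only [Pi.zero_apply, zero_mul]
    norm_cast
    simpa using this
  obtain ⟨γ₀, hγ₀⟩ := hex
  have hL : ∃ l0 : Fin L, True := by
    by_contra hne
    push Not at hne
    have he : IsEmpty (Fin L) := ⟨fun l => hne l⟩
    have := (feas_marg hγ₀).1
    rw [Finset.univ_eq_empty, Finset.sum_empty, Measure.map_zero] at this
    exact IsProbabilityMeasure.ne_zero μ this.symm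
  obtain ⟨l0, -⟩ := hL
  have hIrr : Irr μ ν := by
    refine ⟨pμ, pν, iμ, iν, hco, ho, hcn.isPreconnected.ordConnected, ?_⟩
    rw [ae_iff]
    have := (prob_compl_eq_zero_iff ho.measurableSet).2 (by rw [hfull]; exact measure_univ)
    exact this
  obtain ⟨x₀, hx₀⟩ := hcn.nonempty
  set c' : Fin L → ℝ × ℝ → ℝ := fun l p => c l p + |v p.1| + |w p.2| + 1 with hc'
  have c'1 : ∀ l p, 1 ≤ c' l p := by
    intro l p
    have h1 := neg_abs_le (c l p)
    have h2 := hcb l p.1 p.2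
    have h3 := le_abs_self (v p.1)
    have h4 := le_abs_self (w p.2)
    simp only [hc']
    simp only [Prod.mk.eta] at h2
    linarith
  have c'c : ∀ l, Continuous (c' l) := by
    intro l
    have := hcc l
    simp only [hc']
    fun_prop
  have c'F : ∀ l, c' l ∈ Fone μ ν := by
    intro l
    refine ⟨fun x => 2 * |v x| + 1, fun y => 2 * |w y|, by fun_prop,
      (iv.abs.const_mul 2).add (integrable_const _), by fun_prop, iw.abs.const_mul 2,
      fun x => by positivity, fun x => by positivity, fun p => ?_⟩
    rw [abs_of_nonneg (zero_le_one.trans (c'1 l p))]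
    have h1 := le_abs_self (c l p)
    have h2 := hcb l p.1 p.2
    have h3 := le_abs_self (v p.1)
    have h4 := le_abs_self (w p.2)
    simp only [hc']
    simp only [Prod.mk.eta] at h2
    linarith
  set S : ℝ := ∫ x, (|v x| + 1) ∂μ + ∫ y, |w y| ∂ν with hS
  -- integrability and shift identity
  have shift : ∀ γ : Fin L → Measure (ℝ × ℝ), MLfeasible μ ν γ →
      (∀ l, Integrable (c' l) (γ l)) ∧
      ∑ l, ∫ p, c' l p ∂(γ l) = ∑ l, ∫ p, c l p ∂(γ l) + S ∧ ∑ l, ∫ p, c l p ∂(γ l) ≤ S := by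
    intro γ hγ
    obtain ⟨s1, s2⟩ := slack (φ := fun x => |v x| + 1) (ψ := fun y => |w y|) (θ := fun _ _ => 0)
      iμ iν hγ (iv.abs.add (integrable_const _)) iw.abs (fun _ => measurable_const)
      (fun _ => ⟨0, fun x => by simp⟩)
    simp only [zero_mul, add_zero] at s1 s2
    have ic : ∀ l, Integrable (c l) (γ l) := by
      intro l
      refine (s1 l).mono' (hcc l).aestronglyMeasurable (Filter.Eventually.of_forall fun p => ?_)
      have h2 := hcb l p.1 p.2
      have h3 := le_abs_self (v p.1)
      have h4 := le_abs_self (w p.2)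
      simp only [Prod.mk.eta] at h2
      rw [Real.norm_eq_abs]
      linarith
    have e : ∀ l, c' l = fun p => c l p + (|v p.1| + 1 + |w p.2|) := by
      intro l; funext p; simp only [hc']; ring
    refine ⟨fun l => ?_, ?_, ?_⟩
    · rw [e]; exact (ic l).add (s1 l)
    · rw [hS, ← s2, ← Finset.sum_add_distrib]
      refine Finset.sum_congr rfl fun l _ => ?_
      rw [e, integral_add (ic l) (s1 l)]
    · rw [hS, ← s2]
      refine Finset.sum_le_sum fun l _ => integral_mono (ic l) (s1 l) fun p => ?_
      have h1 := le_abs_self (c l p)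
      have h2 := hcb l p.1 p.2
      have h3 := le_abs_self (v p.1)
      have h4 := le_abs_self (w p.2)
      simp only [Prod.mk.eta] at h2
      simp only
      linarith
  have hle : ∀ γ : Fin L → Measure (ℝ × ℝ), MLfeasible μ ν γ →
      ∑ l, ∫ p, c l p ∂(γ l) ≤ RelaxedValue μ ν c := by
    intro γ hγ
    refine le_csSup ⟨S, ?_⟩ ⟨γ, hγ, rfl⟩
    rintro r ⟨γ', hγ', rfl⟩
    exact (shift γ' hγ').2.2
  obtain ⟨γ₁, hγ₁, hgap⟩ := nogap iμ iν hγ₀ c' c'c c'F l0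
    (zero_lt_one.trans_le (c'1 l0 (0, 0))).ne'
  obtain ⟨G, H, φ, ψ, θ, mG, mH, mφ, mψ, mθ, aG, aH, hineq, hmax⟩ :=
    key (P := RelaxedValue μ ν c + S) hIrr (fun l p => zero_le_one.trans (c'1 l p)) l0 hx₀ (by
      intro ε hε
      obtain ⟨φ, ψ, θ, hr, h⟩ := hgap ε hε
      refine ⟨φ, ψ, θ, hr, h.trans ?_⟩
      have := hle γ₁ hγ₁
      rw [(shift γ₁ hγ₁).2.1]
      linarith)
  classical
  refine ⟨fun x => if x ∈ G then ((φ x - |v x| - 1 : ℝ) : EReal) else ⊤,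
    fun y => if y ∈ H then ((ψ y - |w y| : ℝ) : EReal) else ⊤, θ, ?_, ?_, mθ, ?_, ?_, ?_, ?_,
    ?_, ?_⟩
  · exact Measurable.ite mG (by fun_prop) measurable_const
  · exact Measurable.ite mH (by fun_prop) measurable_const
  · intro x; simp only; split_ifs
    · exact EReal.coe_ne_bot _
    · simp
  · intro x; simp only; split_ifs
    · exact EReal.coe_ne_bot _
    · simp
  · filter_upwards [aG] with x hx
    rw [if_pos hx]; exact EReal.coe_ne_top _
  · filter_upwards [aH] with x hx
    rw [if_pos hx]; exact EReal.coe_ne_top _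
  · intro l x y
    simp only
    by_cases hx : x ∈ G
    · rw [if_pos hx]
      by_cases hy : y ∈ H
      · rw [if_pos hy]
        have := hineq l x hx y hy
        simp only [hc'] at this
        norm_cast
        linarith
      · rw [if_neg hy, EReal.coe_add_top, EReal.top_add_coe]; exact le_top
    · rw [if_neg hx]
      by_cases hy : y ∈ H
      · rw [if_pos hy, EReal.top_add_coe, EReal.top_add_coe]; exact le_top
      · rw [if_neg hy, EReal.top_add_top, EReal.top_add_coe]; exact le_top
  · intro γ hγ hopt l
    obtain ⟨s1, s2, -⟩ := shift γ hγ
    filter_upwards [hmax γ hγ s1 (by rw [s2, hopt]) l] with p hp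
    obtain ⟨hx, hy, he⟩ := hp
    rw [if_pos hx, if_pos hy]
    simp only [hc'] at he
    norm_cast
    linarith
end
end

section
/- (Immediate exercise is suboptimal under convexity) Assume [A], and suppose that y ↦ c₂(x,y) is convex for each x and that c₁(x) ≤ c₂(x,x) for μ-a.e. x. Then for every π = π_x ⊗ μ ∈ ℳ(μ,ν) and every μ₁ ≤ μ (with μ₂ := μ − μ₁ and γ_l := π_x ⊗ μ_l), one has ∫c₁ dγ₁ + ∫c₂ dγ₂ ≤ ∫c₂ dπ. Consequently it is always optimal to choose μ₁ = 0, and P_c = sup over π ∈ ℳ(μ,ν) of ∫c₂ dπ. -/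
open MeasureTheory ProbabilityTheory Set
open scoped ENNReal

noncomputable section

/-- If `y ↦ c₂(x,y)` is convex and `c₁(x) ≤ c₂(x,x)` μ-a.e., then immediate exercise is
suboptimal: every feasible `(π, μ₁)` has value at most `∫ c₂ dπ`, and
`P_c = sup_{π ∈ ℳ(μ,ν)} ∫ c₂ dπ`. -/
theorem immediate_exercise_suboptimal
    (μ ν : Measure ℝ) (c₁ : ℝ → ℝ) (c₂ : ℝ × ℝ → ℝ)
    (hA : AssumpA μ ν c₁ c₂)
    (hconv : ∀ x : ℝ, ConvexOn ℝ Set.univ fun y => c₂ (x, y))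
    (hle : ∀ᵐ x ∂μ, c₁ x ≤ c₂ (x, x)) :
    (∀ (κ : Kernel ℝ ℝ) (μ₁ : Measure ℝ), MartKernel μ ν κ → μ₁ ≤ μ →
      ∫ p, c₁ p.1 ∂(μ₁ ⊗ₘ κ) + ∫ p, c₂ p ∂((μ - μ₁) ⊗ₘ κ) ≤ ∫ p, c₂ p ∂(μ ⊗ₘ κ)) ∧
    PrimalValue μ ν c₁ c₂
      = sSup {r | ∃ κ : Kernel ℝ ℝ, MartKernel μ ν κ ∧ r = ∫ p, c₂ p ∂(μ ⊗ₘ κ)} := by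
  obtain ⟨hμ, hν, hiμ, hiν, hc1, hc2, hco, v, w, hv, hw, hvi, hwi, hb⟩ := hA
  have hint : ∀ κ : Kernel ℝ ℝ, MartKernel μ ν κ →
      Integrable (fun p : ℝ × ℝ => v p.1 + w p.2) (μ ⊗ₘ κ) := by
    intro κ hκ
    obtain ⟨hM, hsnd, -⟩ := hκ
    have hfst : (μ ⊗ₘ κ).map Prod.fst = μ := Measure.fst_compProd μ κ
    have h1 : Integrable (fun p : ℝ × ℝ => v p.1) (μ ⊗ₘ κ) := by
      have : Integrable v ((μ ⊗ₘ κ).map Prod.fst) := by rw [hfst]; exact hvi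
      exact this.comp_measurable measurable_fst
    have h2 : Integrable (fun p : ℝ × ℝ => w p.2) (μ ⊗ₘ κ) := by
      have : Integrable w ((μ ⊗ₘ κ).map Prod.snd) := by rw [hsnd]; exact hwi
      exact this.comp_measurable measurable_snd
    exact h1.add h2
  have hint1 : ∀ κ : Kernel ℝ ℝ, MartKernel μ ν κ →
      Integrable (fun p : ℝ × ℝ => c₁ p.1) (μ ⊗ₘ κ) := by
    intro κ hκ
    refine (hint κ hκ).mono' (hc1.comp continuous_fst).aestronglyMeasurable
      (Filter.Eventually.of_forall fun p => ?_)
    have := hb p.1 p.2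
    have h0 := abs_nonneg (c₂ (p.1, p.2))
    rw [Real.norm_eq_abs]
    linarith
  have hint2 : ∀ κ : Kernel ℝ ℝ, MartKernel μ ν κ → Integrable c₂ (μ ⊗ₘ κ) := by
    intro κ hκ
    refine (hint κ hκ).mono' hc2.aestronglyMeasurable
      (Filter.Eventually.of_forall fun p => ?_)
    have := hb p.1 p.2
    have h0 := abs_nonneg (c₁ p.1)
    rw [Real.norm_eq_abs]
    linarith
  have key : ∀ (κ : Kernel ℝ ℝ) (μ₁ : Measure ℝ), MartKernel μ ν κ → μ₁ ≤ μ →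
      ∫ p, c₁ p.1 ∂(μ₁ ⊗ₘ κ) + ∫ p, c₂ p ∂((μ - μ₁) ⊗ₘ κ) ≤ ∫ p, c₂ p ∂(μ ⊗ₘ κ) := by
    intro κ μ₁ hκ hμ₁
    have hi1 := hint1 κ hκ
    have hi2 := hint2 κ hκ
    obtain ⟨hM, hsnd, hmart⟩ := hκ
    have hf1 : IsFiniteMeasure μ₁ := isFiniteMeasure_of_le μ hμ₁
    have hsum : μ ⊗ₘ κ = (μ - μ₁) ⊗ₘ κ + μ₁ ⊗ₘ κ := by
      rw [← Measure.compProd_add_left, Measure.sub_add_cancel_of_le hμ₁]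
    have hle1 : μ₁ ⊗ₘ κ ≤ μ ⊗ₘ κ := by
      rw [hsum]; exact Measure.le_add_left le_rfl
    have hle2 : (μ - μ₁) ⊗ₘ κ ≤ μ ⊗ₘ κ := by
      rw [hsum]; exact Measure.le_add_right le_rfl
    have hac : μ₁ ≪ μ := Measure.absolutelyContinuous_of_le hμ₁
    have hi1' := hi1.mono_measure hle1
    have hi2' := hi2.mono_measure hle1
    have hsplit : ∫ p, c₂ p ∂(μ ⊗ₘ κ)
        = ∫ p, c₂ p ∂((μ - μ₁) ⊗ₘ κ) + ∫ p, c₂ p ∂(μ₁ ⊗ₘ κ) := by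
      conv_lhs => rw [hsum]
      exact integral_add_measure (hi2.mono_measure hle2) hi2'
    have hmain : ∫ p, c₁ p.1 ∂(μ₁ ⊗ₘ κ) ≤ ∫ p, c₂ p ∂(μ₁ ⊗ₘ κ) := by
      rw [Measure.integral_compProd hi1', Measure.integral_compProd hi2']
      refine integral_mono_ae (MeasureTheory.Integrable.integral_compProd hi1') (MeasureTheory.Integrable.integral_compProd hi2') ?_
      filter_upwards [hac.ae_le hmart, hac.ae_le hle,
        ((Measure.integrable_compProd_iff hi2'.1).1 hi2').1] with x hx hx1 hx2
      have hJ := (hconv x).map_integral_le (μ := κ x) (f := fun y : ℝ => y)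
        (by fun_prop) isClosed_univ (by simp) hx.1 hx2
      rw [hx.2] at hJ
      simpa using hx1.trans hJ
    linarith
  refine ⟨key, ?_⟩
  unfold PrimalValue
  have hsub : ∀ κ : Kernel ℝ ℝ, MartKernel μ ν κ → 
      ∃ (κ' : Kernel ℝ ℝ) (μ₁ : Measure ℝ), MartKernel μ ν κ' ∧ μ₁ ≤ μ ∧
    ∫ p, c₂ p ∂(μ ⊗ₘ κ) = ∫ p, c₁ p.1 ∂(μ₁ ⊗ₘ κ') + ∫ p, c₂ p ∂((μ - μ₁) ⊗ₘ κ') := by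
    intro κ hκ
    refine ⟨κ, 0, hκ, Measure.zero_le μ, ?_⟩
    simp
  have hbd : ∀ κ : Kernel ℝ ℝ, MartKernel μ ν κ →
      ∫ p, c₂ p ∂(μ ⊗ₘ κ) ≤ ∫ x, v x ∂μ + ∫ y, w y ∂ν := by
    intro κ hκ
    have hi2 := hint2 κ hκ
    have hi := hint κ hκ
    obtain ⟨hM, hsnd, -⟩ := hκ
    have hfst : (μ ⊗ₘ κ).map Prod.fst = μ := Measure.fst_compProd μ κ
    have h1 : Integrable (fun p : ℝ × ℝ => v p.1) (μ ⊗ₘ κ) := by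
      have : Integrable v ((μ ⊗ₘ κ).map Prod.fst) := by rw [hfst]; exact hvi
      exact this.comp_measurable measurable_fst
    have h2 : Integrable (fun p : ℝ × ℝ => w p.2) (μ ⊗ₘ κ) := by
      have : Integrable w ((μ ⊗ₘ κ).map Prod.snd) := by rw [hsnd]; exact hwi
      exact this.comp_measurable measurable_snd
    have e1 : ∫ x, v x ∂μ = ∫ p, v p.1 ∂(μ ⊗ₘ κ) := by
      conv_lhs => rw [← hfst]
      exact integral_map measurable_fst.aemeasurable hv.aestronglyMeasurable
    have e2 : ∫ y, w y ∂ν = ∫ p, w p.2 ∂(μ ⊗ₘ κ) := by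
      conv_lhs => rw [← hsnd]
      exact integral_map measurable_snd.aemeasurable hw.aestronglyMeasurable
    rw [e1, e2, ← integral_add h1 h2]
    refine integral_mono hi2 hi fun p => ?_
    have := hb p.1 p.2
    have h0 := abs_nonneg (c₁ p.1)
    have h3 := le_abs_self (c₂ (p.1, p.2))
    change c₂ (p.1, p.2) ≤ v p.1 + w p.2
    linarith
  by_cases hne : ∃ κ : Kernel ℝ ℝ, MartKernel μ ν κ
  · obtain ⟨κ₀, hκ₀⟩ := hne
    apply le_antisymm
    · refine csSup_le ?_ ?_
      · exact ⟨_, hsub κ₀ hκ₀⟩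
      · rintro r ⟨κ, μ₁, hκ, hμ₁, rfl⟩
        refine (key κ μ₁ hκ hμ₁).trans (le_csSup ⟨∫ x, v x ∂μ + ∫ y, w y ∂ν, ?_⟩ ⟨κ, hκ, rfl⟩)
        rintro r ⟨κ', hκ', rfl⟩
        exact hbd κ' hκ'
    · refine csSup_le_csSup ⟨∫ x, v x ∂μ + ∫ y, w y ∂ν, ?_⟩ ⟨_, κ₀, hκ₀, rfl⟩ ?_
      · rintro r ⟨κ', μ₁, hκ', hμ₁, rfl⟩
        exact (key κ' μ₁ hκ' hμ₁).trans (hbd κ' hκ')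
      · rintro r ⟨κ', hκ', rfl⟩
        exact hsub κ' hκ'
  · congr 1
    ext r
    constructor
    · rintro ⟨κ, _, hκ, _⟩
      exact absurd ⟨κ, hκ⟩ hne
    · rintro ⟨κ, hκ, _⟩
      exact absurd ⟨κ, hκ⟩ hne

end
end

section
/- (Convex function affine on the hull of a contact set) Let ψ : ℝ → ℝ be convex and ℓ : ℝ → ℝ affine with ℓ ≤ ψ pointwise. Let σ be a Borel probability measure on ℝ such that ψ(y) = ℓ(y) for σ-a.e. y. Then ψ = ℓ on the smallest closed interval containing the support of σ. -/
open MeasureTheory ProbabilityTheory Set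
open scoped ENNReal

noncomputable section

/-- A convex function equal σ-a.e. to an affine minorant is affine on the smallest closed
interval (the closed convex hull) containing the topological support of `σ`. -/
theorem convex_affine_on_hull_of_contact
    (ψ : ℝ → ℝ) (hψ : ConvexOn ℝ Set.univ ψ)
    (a b : ℝ) (hle : ∀ y, a * y + b ≤ ψ y)
    (σ : Measure ℝ) (hσ : IsProbabilityMeasure σ)
    (heq : ∀ᵐ y ∂σ, ψ y = a * y + b) :
    ∀ y ∈ closure (convexHull ℝ {z : ℝ | ∀ U ∈ nhds z, σ U ≠ 0}),
      ψ y = a * y + b := by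
  have hc : Continuous ψ := by
    rw [← continuousOn_univ]
    exact hψ.continuousOn isOpen_univ
  have hcl : IsClosed {y : ℝ | ψ y = a * y + b} :=
    isClosed_eq hc (by fun_prop)
  have hconv : Convex ℝ {y : ℝ | ψ y = a * y + b} := by
    intro x hx y hy s t hs ht hst
    have h := hψ.2 (mem_univ x) (mem_univ y) hs ht hst
    have h2 := hle (s • x + t • y)
    simp only [mem_setOf_eq, smul_eq_mul] at *
    rw [hx, hy] at h
    refine le_antisymm (h.trans (le_of_eq ?_)) h2
    linear_combination b * hst
  have hsub : {z : ℝ | ∀ U ∈ nhds z, σ U ≠ 0} ⊆ {y : ℝ | ψ y = a * y + b} := by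
    intro z hz
    by_contra hn
    exact hz _ (hcl.isOpen_compl.mem_nhds hn) heq
  exact fun y hy => closure_minimal (convexHull_min hsub hconv) hcl hy

end
end
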